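/- arXiv:0708.2890 — 2 statements merged into one kernel-verified Lean document; each statement's English description precedes it below -/
import Mathlib

section
/- Let g be a complex semisimple Lie algebra with decomposition g = g₁ ⊕ ⋯ ⊕ g_r into simple ideals, let G = Aut(g)⁰ be its adjoint group acting on V = g, and let φ ∈ G'. Then φ(g_i) = g_i for every i, and for each i the restriction φ|_{g_i} equals ε_i·σ_i where ε_i ∈ {1, −1} and σ_i is a Lie algebra automorphism of g_i. -/
noncomputable section

/-- A function `V → ℂ` is a polynomial function if it lies in the subalgebra of
functions generated by the linear functionals, i.e. it is given by a polynomial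
in linear coordinates. -/
def IsPolyFun {V : Type*} [AddCommGroup V] [Module ℂ V] (f : V → ℂ) : Prop :=
  f ∈ Algebra.adjoin ℂ (Set.range fun l : V →ₗ[ℂ] ℂ => (l : V → ℂ))

/-- Given a subgroup `G` of `GL(V)`, the group `G'` of all linear automorphisms of `V`
preserving every `G`-invariant polynomial function on `V`. -/
def primeGroup {V : Type*} [AddCommGroup V] [Module ℂ V]
    (G : Subgroup (V ≃ₗ[ℂ] V)) : Subgroup (V ≃ₗ[ℂ] V) where
  carrier := {φ | ∀ f : V → ℂ, IsPolyFun f →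
      (∀ g ∈ G, ∀ v : V, f (g v) = f v) → ∀ v : V, f (φ v) = f v}
  one_mem' := by intro f _ _ v; rfl
  mul_mem' := by
    intro a b ha hb f hf hinv v
    have h2 : f (a (b v)) = f (b v) := ha f hf hinv (b v)
    exact h2.trans (hb f hf hinv v)
  inv_mem' := by
    intro a ha f hf hinv v
    have h := ha f hf hinv (a⁻¹ v)
    have : a (a⁻¹ v) = v := a.apply_symm_apply v
    rw [this] at h
    exact h.symm

/-- The algebraic exponential of an endomorphism of a finite-dimensional space
(intended for nilpotent endomorphisms, where the series is a finite sum). -/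
def endExp {g : Type*} [AddCommGroup g] [Module ℂ g] [FiniteDimensional ℂ g]
    (A : Module.End ℂ g) : Module.End ℂ g :=
  ∑ k ∈ Finset.range (Module.finrank ℂ g + 1), (k.factorial : ℂ)⁻¹ • A ^ k

/-- The adjoint group `G = Aut(g)⁰` of a semisimple Lie algebra `g`: the subgroup of
`GL(g)` generated by the exponentials of nilpotent inner derivations `ad x`. -/
def adjointGroup (g : Type*) [LieRing g] [LieAlgebra ℂ g] [FiniteDimensional ℂ g] :
    Subgroup (g ≃ₗ[ℂ] g) :=
  Subgroup.closure {u : g ≃ₗ[ℂ] g | ∃ x : g,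
    IsNilpotent (LieAlgebra.ad ℂ g x) ∧ (u : g →ₗ[ℂ] g) = endExp (LieAlgebra.ad ℂ g x)}

/-- The subgroup of `GL(g)` fixing a subalgebra `t` pointwise. -/
def pointwiseStab {g : Type*} [LieRing g] [LieAlgebra ℂ g]
    (t : LieSubalgebra ℂ g) : Subgroup (g ≃ₗ[ℂ] g) where
  carrier := {u | ∀ x ∈ t, u x = x}
  one_mem' := by intro x _; rfl
  mul_mem' := by
    intro a b ha hb x hx
    have : a (b x) = a x := by rw [hb x hx]
    exact this.trans (ha x hx)
  inv_mem' := by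
    intro a ha x hx
    conv_lhs => rw [← ha x hx]
    exact a.symm_apply_apply x

/-- The maximal torus of the adjoint group corresponding to a Cartan subalgebra `t`:
the elements of the adjoint group acting trivially on `t`. -/
def maximalTorus (g : Type*) [LieRing g] [LieAlgebra ℂ g] [FiniteDimensional ℂ g]
    (t : LieSubalgebra ℂ g) : Subgroup (g ≃ₗ[ℂ] g) :=
  adjointGroup g ⊓ pointwiseStab t

lemma powExpand {V : Type*} [AddCommGroup V] [Module ℂ V] (A B : Module.End ℂ V) (k : ℕ) :
    ∀ l : Module.End ℂ V →ₗ[ℂ] ℂ, ∃ p : Polynomial ℂ, ∀ t : ℂ,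
      l ((A + t • B) ^ k) = l (A ^ k) + t * l (∑ i ∈ Finset.range k, A ^ i * B * A ^ (k - 1 - i))
        + t ^ 2 * p.eval t := by
  induction k with
  | zero => intro l; exact ⟨0, fun t => by simp⟩
  | succ k ih =>
    intro l
    obtain ⟨p, hp⟩ := ih (l ∘ₗ LinearMap.mulRight ℂ A)
    obtain ⟨q, hq⟩ := ih (l ∘ₗ LinearMap.mulRight ℂ B)
    have hS : ∑ i ∈ Finset.range (k+1), A ^ i * B * A ^ (k + 1 - 1 - i)
        = (∑ i ∈ Finset.range k, A ^ i * B * A ^ (k - 1 - i)) * A + A ^ k * B := by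
      rw [Finset.sum_range_succ, Finset.sum_mul]
      congr 1
      · refine Finset.sum_congr rfl fun i hi => ?_
        have := Finset.mem_range.1 hi
        rw [mul_assoc _ _ A, ← pow_succ]
        congr 2
        omega
      · simp
    refine ⟨p + Polynomial.C (l ((∑ i ∈ Finset.range k, A ^ i * B * A ^ (k - 1 - i)) * B))
      + Polynomial.X * q, fun t => ?_⟩
    have h1 := hp t
    have h2 := hq t
    simp only [LinearMap.comp_apply, LinearMap.mulRight_apply] at h1 h2
    rw [hS, pow_succ, mul_add, map_add, h1, mul_smul_comm, map_smul, h2, map_add]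
    simp only [Polynomial.eval_add, Polynomial.eval_C, Polynomial.eval_mul, Polynomial.eval_X,
      smul_eq_mul, pow_succ]
    ring

lemma coeff_zero_of_forall (a : ℂ) (p : Polynomial ℂ)
    (h : ∀ t : ℂ, t * a + t ^ 2 * p.eval t = 0) : a = 0 := by
  have hP : Polynomial.X * Polynomial.C a + Polynomial.X ^ 2 * p = 0 := by
    apply Polynomial.funext
    intro t
    have := h t
    simp only [Polynomial.eval_add, Polynomial.eval_mul, Polynomial.eval_pow, Polynomial.eval_X,
      Polynomial.eval_C, Polynomial.eval_zero]
    exact this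
  have := congrArg (fun q => Polynomial.coeff q 1) hP
  simpa [Polynomial.coeff_X_pow_mul'] using this

lemma commPow {V : Type*} [AddCommGroup V] [Module ℂ V] (X A : Module.End ℂ V) (k : ℕ) :
    ∑ i ∈ Finset.range k, A ^ i * (X * A - A * X) * A ^ (k - 1 - i) = X * A ^ k - A ^ k * X := by
  induction k with
  | zero => simp
  | succ k ih =>
    have hS : ∑ i ∈ Finset.range (k+1), A ^ i * (X * A - A * X) * A ^ (k + 1 - 1 - i)
        = (∑ i ∈ Finset.range k, A ^ i * (X * A - A * X) * A ^ (k - 1 - i)) * A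
          + A ^ k * (X * A - A * X) := by
      rw [Finset.sum_range_succ, Finset.sum_mul]
      congr 1
      · refine Finset.sum_congr rfl fun i hi => ?_
        have := Finset.mem_range.1 hi
        rw [mul_assoc _ _ A, ← pow_succ]
        congr 2
        omega
      · simp
    rw [hS, ih, pow_succ]
    noncomm_ring

section
variable {g : Type*} [LieRing g] [LieAlgebra ℂ g]

lemma ad_lie_eq (x y : g) : LieAlgebra.ad ℂ g ⁅x, y⁆
    = LieAlgebra.ad ℂ g x * LieAlgebra.ad ℂ g y - LieAlgebra.ad ℂ g y * LieAlgebra.ad ℂ g x := by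
  ext z; simp

lemma trace_pow_lie [FiniteDimensional ℂ g] (v w : g) (k : ℕ) :
    LinearMap.trace ℂ g
      (∑ i ∈ Finset.range (k+1), LieAlgebra.ad ℂ g v ^ i * LieAlgebra.ad ℂ g w
        * LieAlgebra.ad ℂ g v ^ (k + 1 - 1 - i))
      = (k + 1) * LinearMap.trace ℂ g (LieAlgebra.ad ℂ g v ^ k * LieAlgebra.ad ℂ g w) := by
  rw [map_sum]
  rw [Finset.sum_congr rfl (g := fun _ => LinearMap.trace ℂ g (LieAlgebra.ad ℂ g v ^ k * LieAlgebra.ad ℂ g w))]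
  · simp
  · intro i hi
    have := Finset.mem_range.1 hi
    rw [LinearMap.trace_mul_comm, ← mul_assoc, ← pow_add]
    congr 3
    omega

/-- linear maps which infinitesimally preserve the functions `tr (ad v)^k`. -/
def infH (g : Type*) [LieRing g] [LieAlgebra ℂ g] : LieSubmodule ℂ g (g →ₗ[ℂ] g) where
  carrier := {D | ∀ (v : g) (k : ℕ),
    LinearMap.trace ℂ g (LieAlgebra.ad ℂ g v ^ k * LieAlgebra.ad ℂ g (D v)) = 0}
  add_mem' := by
    intro a b ha hb v k
    simp only [LinearMap.add_apply, map_add, mul_add, ha v k, hb v k, add_zero]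
  zero_mem' := by intro v k; simp
  smul_mem' := by
    intro c a ha v k
    simp only [LinearMap.smul_apply, map_smul, mul_smul_comm, ha v k, smul_zero]
  lie_mem := by
    intro x D hD v k
    have hD : ∀ (v : g) (k : ℕ),
      LinearMap.trace ℂ g (LieAlgebra.ad ℂ g v ^ k * LieAlgebra.ad ℂ g (D v)) = 0 := hD
    set A := LieAlgebra.ad ℂ g v with hA
    set X := LieAlgebra.ad ℂ g x with hX
    set w := ⁅x, v⁆ with hw
    obtain ⟨p, hp⟩ := powExpand A (LieAlgebra.ad ℂ g w) k
      (LinearMap.trace ℂ g ∘ₗ LinearMap.mulRight ℂ (LieAlgebra.ad ℂ g (D v)))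
    obtain ⟨q, hq⟩ := powExpand A (LieAlgebra.ad ℂ g w) k
      (LinearMap.trace ℂ g ∘ₗ LinearMap.mulRight ℂ (LieAlgebra.ad ℂ g (D w)))
    simp only [LinearMap.comp_apply, LinearMap.mulRight_apply] at hp hq
    have hAw : LieAlgebra.ad ℂ g w = X * A - A * X := ad_lie_eq x v
    rw [hAw, commPow] at hp hq
    have key := coeff_zero_of_forall
      (LinearMap.trace ℂ g ((X * A ^ k - A ^ k * X) * LieAlgebra.ad ℂ g (D v))
        + LinearMap.trace ℂ g (A ^ k * LieAlgebra.ad ℂ g (D w)))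
      (p + Polynomial.C (LinearMap.trace ℂ g ((X * A ^ k - A ^ k * X) * LieAlgebra.ad ℂ g (D w)))
        + Polynomial.X * q) (fun t => by
          have h0 := hD (v + t • w) k
          have h1 := hD v k
          rw [map_add, map_smul, hAw, map_add, map_smul, map_add, map_smul, mul_add, map_add,
            mul_smul_comm, map_smul, hp t, hq t, h1] at h0
          simp only [smul_eq_mul] at h0
          simp only [Polynomial.eval_add, Polynomial.eval_C, Polynomial.eval_mul, Polynomial.eval_X]
          linear_combination h0)
    rw [LieHom.lie_apply, map_sub, ad_lie_eq]
    have e1 : LinearMap.trace ℂ g ((X * A ^ k - A ^ k * X) * LieAlgebra.ad ℂ g (D v))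
        = - LinearMap.trace ℂ g (A ^ k * (X * LieAlgebra.ad ℂ g (D v)
            - LieAlgebra.ad ℂ g (D v) * X)) := by
      rw [sub_mul, mul_sub, map_sub, map_sub, mul_assoc X, LinearMap.trace_mul_comm ℂ X]
      simp only [mul_assoc]
      ring
    rw [e1] at key
    rw [mul_sub, map_sub]
    linear_combination -key

lemma mem_infH {D : g →ₗ[ℂ] g} : D ∈ infH g ↔ ∀ (v : g) (k : ℕ),
    LinearMap.trace ℂ g (LieAlgebra.ad ℂ g v ^ k * LieAlgebra.ad ℂ g (D v)) = 0 := Iff.rfl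

lemma ad_mem_infH (x : g) : (LieAlgebra.ad ℂ g x : g →ₗ[ℂ] g) ∈ infH g := by
  intro v k
  rw [LieAlgebra.ad_apply, ad_lie_eq, mul_sub, map_sub, ← mul_assoc,
    LinearMap.trace_mul_comm ℂ (_ * _) (LieAlgebra.ad ℂ g v)]
  simp only [← mul_assoc, ← pow_succ, ← pow_succ']
  simp

lemma conj_mem_infH [FiniteDimensional ℂ g] (φ : g ≃ₗ[ℂ] g)
    (h : ∀ (v : g) (k : ℕ), LinearMap.trace ℂ g (LieAlgebra.ad ℂ g (φ v) ^ k)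
      = LinearMap.trace ℂ g (LieAlgebra.ad ℂ g v ^ k)) (x : g) :
    (φ : g →ₗ[ℂ] g) ∘ₗ (LieAlgebra.ad ℂ g x : g →ₗ[ℂ] g) ∘ₗ (φ.symm : g →ₗ[ℂ] g) ∈ infH g := by
  have key : ∀ (v w : g) (k : ℕ),
      LinearMap.trace ℂ g (LieAlgebra.ad ℂ g (φ v) ^ k * LieAlgebra.ad ℂ g (φ w))
      = LinearMap.trace ℂ g (LieAlgebra.ad ℂ g v ^ k * LieAlgebra.ad ℂ g w) := by
    intro v w k
    obtain ⟨p, hp⟩ := powExpand (LieAlgebra.ad ℂ g (φ v)) (LieAlgebra.ad ℂ g (φ w)) (k+1)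
      (LinearMap.trace ℂ g)
    obtain ⟨q, hq⟩ := powExpand (LieAlgebra.ad ℂ g v) (LieAlgebra.ad ℂ g w) (k+1)
      (LinearMap.trace ℂ g)
    rw [trace_pow_lie] at hp hq
    have := coeff_zero_of_forall
      ((k + 1) * LinearMap.trace ℂ g (LieAlgebra.ad ℂ g (φ v) ^ k * LieAlgebra.ad ℂ g (φ w))
       - (k + 1) * LinearMap.trace ℂ g (LieAlgebra.ad ℂ g v ^ k * LieAlgebra.ad ℂ g w)) (p - q)
      (fun t => by
        have h1 := h (v + t • w) (k+1)
        rw [map_add, map_smul, map_add, map_smul, map_add, map_smul, hp t, hq t, h v (k+1)] at h1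
        rw [Polynomial.eval_sub]
        linear_combination h1)
    have hk : (k + 1 : ℂ) ≠ 0 := Nat.cast_add_one_ne_zero k
    rw [← mul_sub] at this
    exact sub_eq_zero.1 ((mul_eq_zero.1 this).resolve_left hk)
  intro v k
  obtain ⟨v, rfl⟩ := φ.surjective v
  simp only [LinearMap.comp_apply, LinearEquiv.coe_coe, LinearEquiv.symm_apply_apply]
  rw [key]
  exact ad_mem_infH x v k

end

set_option linter.unusedSectionVars false
section
open LieAlgebra LieModule
variable {g : Type*} [LieRing g] [LieAlgebra ℂ g] [FiniteDimensional ℂ g] [IsKilling ℂ g]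
  {H : LieSubalgebra ℂ g} [H.IsCartanSubalgebra]

def IsWt (H : LieSubalgebra ℂ g) [H.IsCartanSubalgebra] (D : g →ₗ[ℂ] g) (μ : H → ℂ) : Prop :=
  ∀ (β : H → ℂ) (x : g), x ∈ rootSpace H β → D x ∈ rootSpace H (β + μ)

lemma mem_rootSpace_zero_iff (x : g) : x ∈ rootSpace H (0 : H → ℂ) ↔ x ∈ H := by
  rw [← LieSubalgebra.mem_toLieSubmodule, rootSpace_zero_eq]

lemma IsWt.lie {D : g →ₗ[ℂ] g} {μ α : H → ℂ} (hD : IsWt H D μ) {x : g} (hx : x ∈ rootSpace H α) :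
    IsWt H ⁅x, D⁆ (α + μ) := by
  intro β y hy
  rw [LieHom.lie_apply]
  refine sub_mem ?_ ?_
  · have := lie_mem_genWeightSpace_of_mem_genWeightSpace hx (hD β y hy)
    rwa [add_left_comm] at this
  · have := hD _ _ (lie_mem_genWeightSpace_of_mem_genWeightSpace hx hy)
    rwa [add_comm α β, add_assoc] at this

lemma isWt_ad {α : H → ℂ} {x : g} (hx : x ∈ rootSpace H α) : IsWt H (ad ℂ g x) α := by
  intro β y hy
  have := lie_mem_genWeightSpace_of_mem_genWeightSpace hx hy
  rwa [add_comm] at this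

lemma IsWt.add {D E : g →ₗ[ℂ] g} {μ : H → ℂ} (hD : IsWt H D μ) (hE : IsWt H E μ) :
    IsWt H (D + E) μ := fun β x hx => add_mem (hD β x hx) (hE β x hx)

lemma isWt_of_mem_genWeightSpace {D : g →ₗ[ℂ] g} {μ : H → ℂ}
    (hD : D ∈ genWeightSpace (L := H) (g →ₗ[ℂ] g) μ) : IsWt H D μ := by
  intro β x hx
  rw [mem_genWeightSpace] at hD ⊢
  intro h
  obtain ⟨k, hk⟩ := hD h
  refine ⟨k, ?_⟩
  have hhx : ⁅(h : g), x⁆ = β h • x := IsKilling.lie_eq_smul_of_mem_rootSpace hx h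
  have key : ∀ n : ℕ, ∀ D : g →ₗ[ℂ] g,
      ((toEnd ℂ H g h - (β + μ) h • (1 : Module.End ℂ g)) ^ n) (D x) =
      (((toEnd ℂ H (g →ₗ[ℂ] g) h - μ h • (1 : Module.End ℂ (g →ₗ[ℂ] g))) ^ n) D) x := by
    intro n
    induction n with
    | zero => intro D; simp
    | succ n ih =>
      intro D
      rw [pow_succ, pow_succ, Module.End.mul_apply, Module.End.mul_apply, ← ih]
      congr 1
      simp [LieHom.lie_apply, hhx, add_smul]
      abel
  have := key k D
  change (((toEnd ℂ H g h - (β + μ) h • (1 : Module.End ℂ g)) ^ k) (D x)) = 0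
  rw [this]
  have hk' : ((toEnd ℂ H (g →ₗ[ℂ] g) h - μ h • (1 : Module.End ℂ (g →ₗ[ℂ] g))) ^ k) D = 0 := hk
  rw [hk']; rfl

lemma infH_induction (P : Submodule ℂ (g →ₗ[ℂ] g))
    (hP : ∀ (μ : H → ℂ) (D : g →ₗ[ℂ] g), D ∈ infH g → IsWt H D μ → D ∈ P) :
    ∀ D ∈ infH g, D ∈ P := by
  intro D hD
  have h := eq_iSup_inf_genWeightSpace (K := ℂ) (L := H) (M := g →ₗ[ℂ] g) ((infH g).restr H)
  have hD' : D ∈ (infH g).restr H := hD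
  rw [h] at hD'
  have hle : (⨆ χ : Weight ℂ H (g →ₗ[ℂ] g), (infH g).restr H ⊓ genWeightSpace (g →ₗ[ℂ] g) χ).toSubmodule
      ≤ P := by
    rw [LieSubmodule.iSup_toSubmodule]
    refine iSup_le fun χ E hE => ?_
    have hE' : E ∈ (infH g).restr H ⊓ genWeightSpace (g →ₗ[ℂ] g) χ := hE
    rw [LieSubmodule.mem_inf] at hE'
    exact hP χ E hE'.1 (isWt_of_mem_genWeightSpace hE'.2)
  exact hle hD'

lemma g_induction (P : Submodule ℂ g)
    (h0 : ∀ h ∈ H, h ∈ P)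
    (h1 : ∀ (α : Weight ℂ H g), α.IsNonZero → ∀ x ∈ rootSpace H α, x ∈ P) : ∀ x, x ∈ P := by
  intro x
  have h := iSup_genWeightSpace_eq_top' ℂ H g
  have hle : (⨆ χ : Weight ℂ H g, genWeightSpace g χ).toSubmodule ≤ P := by
    rw [LieSubmodule.iSup_toSubmodule]
    refine iSup_le fun χ y hy => ?_
    by_cases hχ : χ.IsZero
    · have hy' : y ∈ rootSpace H (χ : H → ℂ) := hy
      rw [hχ] at hy'
      exact h0 y ((mem_rootSpace_zero_iff y).1 hy')
    · exact h1 χ hχ y hy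
  rw [h] at hle
  exact hle trivial

lemma trace_formula (h h' : H) (k : ℕ) :
    LinearMap.trace ℂ g (ad ℂ g (h : g) ^ k * ad ℂ g (h' : g))
      = ∑ χ : Weight ℂ H g, (Module.finrank ℂ (genWeightSpace g χ) * χ h') * χ h ^ k := by
  classical
  have act : ∀ (χ : Weight ℂ H g) (x : g), x ∈ genWeightSpace g χ →
      (ad ℂ g (h : g) ^ k * ad ℂ g (h' : g)) x = (χ h ^ k * χ h') • x := by
    intro χ x hx
    have e : ∀ h : H, ad ℂ g (h : g) x = χ h • x := fun h =>
      IsKilling.lie_eq_smul_of_mem_rootSpace hx h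
    have e2 : ∀ n : ℕ, (ad ℂ g (h : g) ^ n) x = χ h ^ n • x := by
      intro n
      induction n with
      | zero => simp
      | succ n ih => rw [pow_succ, Module.End.mul_apply, e, map_smul, ih, smul_smul, pow_succ']
    rw [Module.End.mul_apply, e, map_smul, e2, smul_smul, mul_comm]
  have hds := DirectSum.isInternal_submodule_of_iSupIndep_of_iSup_eq_top
    (LieSubmodule.iSupIndep_toSubmodule.mpr <| iSupIndep_genWeightSpace' ℂ H g)
    (LieSubmodule.iSup_toSubmodule_eq_top.mpr <| iSup_genWeightSpace_eq_top' ℂ H g)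
  have hmaps : ∀ χ : Weight ℂ H g, Set.MapsTo (ad ℂ g (h : g) ^ k * ad ℂ g (h' : g))
      ((genWeightSpace g χ).toSubmodule : Set g) ((genWeightSpace g χ).toSubmodule : Set g) := by
    intro χ x hx
    rw [act χ x hx]
    exact Submodule.smul_mem _ _ hx
  rw [LinearMap.trace_eq_sum_trace_restrict hds hmaps]
  refine Finset.sum_congr rfl fun χ _ => ?_
  have : (ad ℂ g (h : g) ^ k * ad ℂ g (h' : g)).restrict (hmaps χ)
      = (χ h ^ k * χ h') • LinearMap.id := by
    ext x
    exact act χ x x.2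
  rw [this, map_smul, LinearMap.trace_id, smul_eq_mul]
  change _ * (Module.finrank ℂ (genWeightSpace g χ) : ℂ) = _
  ring

lemma vandermonde {ι : Type*} [Fintype ι] (f v : ι → ℂ) (hf : Function.Injective f)
    (h : ∀ k : ℕ, ∑ i, v i * f i ^ k = 0) : ∀ i, v i = 0 := by
  let e := (Fintype.equivFin ι).symm
  have := Matrix.eq_zero_of_forall_pow_sum_mul_pow_eq_zero (f := f ∘ e) (v := v ∘ e)
    (hf.comp e.injective) (fun i => by
      rw [← h i]
      exact Equiv.sum_comp e (fun j => v j * f j ^ (i:ℕ)))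
  intro i
  have h2 := congrFun this (e.symm i)
  simpa using h2

lemma kills_of_mapsTo {E : g →ₗ[ℂ] g} (hE : E ∈ infH g) (hmap : ∀ h ∈ H, E h ∈ H) :
    ∀ h ∈ H, E h = 0 := by
  classical
  let EH : H →ₗ[ℂ] H := E.restrict hmap
  by_contra hcon
  push Not at hcon
  obtain ⟨h1, hh1, hne⟩ := hcon
  have hne' : EH ⟨h1, hh1⟩ ≠ 0 := fun h => hne (congrArg Subtype.val h)
  have hα : ∃ α : Weight ℂ H g, α (EH ⟨h1, hh1⟩) ≠ 0 := by
    by_contra hc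
    push Not at hc
    have : EH ⟨h1, hh1⟩ ∈ ⨅ α : Weight ℂ H g, α.ker := by
      rw [Submodule.mem_iInf]
      intro α
      exact hc α
    rw [IsKilling.iInf_ker_weight_eq_bot] at this
    exact hne' this
  obtain ⟨α, hα⟩ := hα
  let F : Option {p : Weight ℂ H g × Weight ℂ H g // p.1 ≠ p.2} → Module.Dual ℂ H := fun o =>
    match o with
    | none => (Weight.toLinear ℂ H g α) ∘ₗ EH
    | some p => Weight.toLinear ℂ H g p.1.1 - Weight.toLinear ℂ H g p.1.2
  obtain ⟨h, -, hh⟩ := Module.Dual.exists_forall_mem_ne_zero_of_forall_exists (⊤ : Submodule ℂ H) F (by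
    rintro (_ | ⟨⟨a, b⟩, hab⟩)
    · exact ⟨_, trivial, hα⟩
    · by_contra hc
      push Not at hc
      apply hab
      ext x
      have := hc x trivial
      exact sub_eq_zero.1 this)
  have hinj : Function.Injective (fun χ : Weight ℂ H g => χ h) := by
    intro a b hab
    by_contra hne
    exact hh (some ⟨(a, b), hne⟩) (sub_eq_zero.2 hab)
  have := vandermonde (fun χ : Weight ℂ H g => χ h)
    (fun χ => Module.finrank ℂ (genWeightSpace g χ) * χ (EH h)) hinj (fun k => by
      rw [← trace_formula h (EH h) k]
      exact hE h k) α
  have hf : (Module.finrank ℂ (genWeightSpace g α) : ℂ) ≠ 0 := by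
    exact_mod_cast (zero_lt_finrank_genWeightSpace α.genWeightSpace_ne_bot).ne'
  exact hh none ((mul_eq_zero.1 this).resolve_left hf)

lemma IsWt.kills_zero {E : g →ₗ[ℂ] g} (hE : E ∈ infH g) (hw : IsWt H E 0) :
    ∀ h ∈ H, E h = 0 := by
  refine kills_of_mapsTo hE fun h hh => ?_
  have := hw 0 h ((mem_rootSpace_zero_iff h).2 hh)
  rwa [add_zero, mem_rootSpace_zero_iff] at this

end

section
open LieAlgebra LieModule
variable {g : Type*} [LieRing g] [LieAlgebra ℂ g] [FiniteDimensional ℂ g] [IsKilling ℂ g]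
  {H : LieSubalgebra ℂ g} [H.IsCartanSubalgebra]

lemma eq_zero_of_forall_lie {δ : H → ℂ} {y : g} (hy : y ∈ rootSpace H δ)
    (hδ : δ ≠ 0)
    (h : ∀ z ∈ rootSpace H (-δ), ⁅z, y⁆ = 0) : y = 0 := by
  by_cases hbot : rootSpace H δ = ⊥
  · rw [hbot] at hy; exact hy
  let α : Weight ℂ H g := ⟨δ, hbot⟩
  have hα : α.IsNonZero := fun h0 => hδ h0
  have hne : ((IsKilling.cartanEquivDual H).symm α : H) ≠ 0 := by
    intro h0
    apply IsKilling.root_apply_cartanEquivDual_symm_ne_zero hα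
    rw [h0]
    exact (Weight.toLinear ℂ H g α).map_zero
  have hk : y ∈ LinearMap.ker (killingForm ℂ g) := by
    refine mem_ker_killingForm_of_mem_rootSpace_of_forall_rootSpace_neg ℂ g H hy ?_
    intro z hz
    have h1 := IsKilling.lie_eq_killingForm_smul_of_mem_rootSpace_of_mem_rootSpace_neg
      (α := α) (e := y) (f := z) hy hz
    rw [← lie_skew, h z hz, neg_zero] at h1
    have h2 := smul_eq_zero.1 h1.symm
    refine h2.resolve_right fun h3 => hne ?_
    exact Subtype.ext h3
  simpa using hk

/-- Key lemma. -/
lemma eq_zero_of_kills {D : g →ₗ[ℂ] g} {μ : H → ℂ} (hD : D ∈ infH g) (hw : IsWt H D μ)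
    (hμ : μ ≠ 0) (hk : ∀ h ∈ H, D h = 0) : D = 0 := by
  have hx0 : ∀ x, x ∈ LinearMap.ker D := by
    refine g_induction (H := H) (LinearMap.ker D) (fun h hh => hk h hh) ?_
    intro β hβ x hx
    rw [LinearMap.mem_ker]
    have hy := hw β x hx
    set y := D x with hydef
    have hβh : ∃ h : H, β h ≠ 0 := by
      by_contra hc
      push Not at hc
      exact hβ (funext hc)
    have act : ∀ {γ : H → ℂ} {z : g}, z ∈ rootSpace H γ → ∀ h : H, ⁅(h : g), z⁆ = γ h • z :=
      fun hz h => IsKilling.lie_eq_smul_of_mem_rootSpace hz h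
    have act' : ∀ {γ : H → ℂ} {z : g}, z ∈ rootSpace H γ → ∀ h : H, ⁅z, (h : g)⁆ = -(γ h • z) :=
      fun hz h => by rw [← lie_skew, act hz h]
    have hxD : ∀ h : H, ⁅x, D⁆ (h : g) = β h • y := by
      intro h
      rw [LieHom.lie_apply, hk h h.2, lie_zero, act' hx h, map_neg, map_smul, zero_sub, neg_neg]
    by_cases hδ : (β : H → ℂ) + μ = 0
    · have hE : IsWt H ⁅x, D⁆ 0 := hδ ▸ hw.lie hx
      obtain ⟨h, hh⟩ := hβh
      have := hE.kills_zero ((infH g).lie_mem hD) h h.2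
      rw [hxD] at this
      exact (smul_eq_zero.1 this).resolve_left hh
    · refine eq_zero_of_forall_lie hy hδ fun z hz => ?_
      set γ : H → ℂ := -(β + μ) with hγ
      have hE : IsWt H ⁅z, ⁅x, D⁆⁆ 0 := by
        have := (hw.lie hx).lie hz
        rwa [hγ, neg_add_cancel] at this
      have hkE := hE.kills_zero ((infH g).lie_mem ((infH g).lie_mem hD))
      have hEh : ∀ h : H, β h • ⁅z, y⁆ + γ h • ⁅x, D⁆ z = 0 := by
        intro h
        have := hkE h h.2
        rw [LieHom.lie_apply, hxD, act' hz h, lie_smul, map_neg, map_smul, sub_neg_eq_add] at this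
        exact this
      by_cases hz0 : z = 0
      · simp [hz0]
      have hγbot : rootSpace H γ ≠ ⊥ := by
        intro hb
        rw [hb] at hz
        exact hz0 hz
      let γw : Weight ℂ H g := ⟨γ, hγbot⟩
      have hγw : γw.IsNonZero := by
        intro h0
        have : γ = 0 := h0
        apply hδ
        rw [hγ, neg_eq_zero] at this
        exact this
      by_cases hex : ∃ h : H, γ h = 0 ∧ β h ≠ 0
      · obtain ⟨h, h1, h2⟩ := hex
        have := hEh h
        rw [h1, zero_smul, add_zero] at this
        exact (smul_eq_zero.1 this).resolve_left h2
      · push Not at hex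
        -- `β` is a multiple of `γ`
        have hprop : ∃ c : ℂ, (β : H → ℂ) = c • (γw : H → ℂ) := by
          have hker : LinearMap.ker (Weight.toLinear ℂ H g γw)
              ≤ LinearMap.ker (Weight.toLinear ℂ H g β) := fun h hh => hex h hh
          have hγ2 : γw (IsKilling.coroot γw) = 2 := IsKilling.root_apply_coroot hγw
          refine ⟨β (IsKilling.coroot γw) / 2, funext fun h => ?_⟩
          have hm : h - (γw h / 2) • IsKilling.coroot γw ∈ LinearMap.ker (Weight.toLinear ℂ H g γw) := by
            rw [LinearMap.mem_ker, map_sub, map_smul]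
            simp only [Weight.toLinear_apply, smul_eq_mul, hγ2]
            ring
          have := hker hm
          rw [LinearMap.mem_ker, map_sub, map_smul] at this
          simp only [Weight.toLinear_apply, smul_eq_mul] at this
          simp only [Pi.smul_apply, smul_eq_mul]
          linear_combination this
        obtain ⟨c, hc⟩ := hprop
        rcases IsKilling.eq_neg_or_eq_of_eq_smul γw β hβ c hc with h1 | h1
        · exfalso
          apply hμ
          have h2 : (β : H → ℂ) = -γ := by rw [h1]; rfl
          rw [hγ, neg_neg] at h2
          simpa using h2
        · have h2 : (β : H → ℂ) = γ := by rw [h1]; rfl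
          have hzβ : z ∈ rootSpace H β := by rw [h2]; exact hz
          by_cases hx00 : x = 0
          · rw [hydef, hx00]; simp
          obtain ⟨a, ha⟩ : ∃ a : ℂ, z = a • x := by
            have h1d := IsKilling.finrank_rootSpace_eq_one β hβ
            have := (finrank_eq_one_iff_of_nonzero' (⟨x, hx⟩ : rootSpace H β)
              (fun h => hx00 (congrArg Subtype.val h))).1 h1d ⟨z, hzβ⟩
            obtain ⟨a, ha⟩ := this
            exact ⟨a, (congrArg Subtype.val ha).symm⟩
          have hxz : ⁅x, D⁆ z = ⁅z, y⁆ := by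
            rw [LieHom.lie_apply, ha, map_smul, lie_smul, lie_smul, lie_self, smul_zero, map_zero,
              sub_zero, smul_lie]
          obtain ⟨h, hh⟩ := hβh
          have := hEh h
          rw [hxz, ← h2, ← add_smul] at this
          refine (smul_eq_zero.1 this).resolve_left ?_
          rw [← two_mul]
          exact mul_ne_zero two_ne_zero hh
  ext x
  exact hx0 x

lemma inner_of_isWt {D : g →ₗ[ℂ] g} {μ : H → ℂ} (hD : D ∈ infH g) (hw : IsWt H D μ)
    (hμ : μ ≠ 0) : ∃ a ∈ rootSpace H μ, D = ad ℂ g a := by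
  have hDh : ∀ h ∈ H, D h ∈ rootSpace H μ := by
    intro h hh
    have := hw 0 h ((mem_rootSpace_zero_iff h).2 hh)
    rwa [zero_add] at this
  by_cases hbot : rootSpace H μ = ⊥
  · refine ⟨0, zero_mem _, ?_⟩
    rw [map_zero]
    refine eq_zero_of_kills hD hw hμ fun h hh => ?_
    have := hDh h hh
    rw [hbot] at this
    exact this
  let α : Weight ℂ H g := ⟨μ, hbot⟩
  have hα : α.IsNonZero := fun h0 => hμ h0
  have hα2 : α (IsKilling.coroot α) = 2 := IsKilling.root_apply_coroot hα
  have act' : ∀ {γ : H → ℂ} {z : g}, z ∈ rootSpace H γ → ∀ h : H, ⁅z, (h : g)⁆ = -(γ h • z) :=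
    fun hz h => by
      rw [← lie_skew]
      exact congrArg _ (IsKilling.lie_eq_smul_of_mem_rootSpace hz h)
  have hker : ∀ h : H, μ h = 0 → D h = 0 := by
    intro h hh
    refine eq_zero_of_forall_lie (hDh h h.2) hμ fun z hz => ?_
    have hE : IsWt H ⁅z, D⁆ 0 := by
      have := hw.lie hz
      rwa [neg_add_cancel] at this
    have := hE.kills_zero ((infH g).lie_mem hD) h h.2
    rw [LieHom.lie_apply, act' hz h, Pi.neg_apply, hh] at this
    simpa using this
  set h0 := IsKilling.coroot α with hh0
  let a : g := (-(1/2 : ℂ)) • D h0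
  have ha : a ∈ rootSpace H μ := Submodule.smul_mem (rootSpace H μ).toSubmodule _ (hDh h0 h0.2)
  refine ⟨a, ha, ?_⟩
  have hz : D + ad ℂ g (-a) = 0 := by
    have hna : -a ∈ rootSpace H μ := neg_mem ha
    refine eq_zero_of_kills (add_mem hD (ad_mem_infH (-a))) (hw.add (isWt_ad hna)) hμ ?_
    intro h hh
    rw [LinearMap.add_apply, ad_apply]
    have e1 := act' hna ⟨h, hh⟩
    rw [e1]
    have hk := hker (⟨h, hh⟩ - (α ⟨h, hh⟩ / 2) • h0) (by
      change Weight.toLinear ℂ H g α _ = 0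
      rw [map_sub, map_smul]
      simp only [Weight.toLinear_apply, smul_eq_mul, hα2]
      ring)
    have hk' : D h - (α ⟨h, hh⟩ / 2) • D h0 = 0 := by
      rw [← map_smul, ← map_sub]; exact hk
    rw [sub_eq_zero.1 hk']
    change _ + -(α ⟨h, hh⟩ • -((-(1/2 : ℂ)) • D h0)) = 0
    module
  rw [map_neg, ← sub_eq_add_neg, sub_eq_zero] at hz
  exact hz

lemma inner_of_isWt_zero {D : g →ₗ[ℂ] g} (hD : D ∈ infH g) (hw : IsWt H D 0) :
    ∃ a, D = ad ℂ g a := by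
  have hk := hw.kills_zero hD
  have act' : ∀ {γ : H → ℂ} {z : g}, z ∈ rootSpace H γ → ∀ h : H, ⁅z, (h : g)⁆ = -(γ h • z) :=
    fun hz h => by
      rw [← lie_skew]
      exact congrArg _ (IsKilling.lie_eq_smul_of_mem_rootSpace hz h)
  let P : Submodule ℂ g :=
    { carrier := {x | ∀ y, D ⁅x, y⁆ = ⁅D x, y⁆ + ⁅x, D y⁆}
      add_mem' := by
        intro a b ha hb y
        rw [add_lie, map_add, ha y, hb y, map_add, add_lie, add_lie]; abel
      zero_mem' := by intro y; simp
      smul_mem' := by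
        intro c a ha y
        rw [smul_lie, map_smul, ha y, map_smul, smul_lie, smul_lie, smul_add] }
  have hP : ∀ x, x ∈ P := by
    refine g_induction (H := H) P ?_ ?_
    · intro h hh y
      rw [hk h hh, zero_lie, zero_add]
      let Q : Submodule ℂ g := LinearMap.ker (⁅h, D⁆ : g →ₗ[ℂ] g)
      have hQ : ∀ y, y ∈ Q := by
        refine g_induction (H := H) Q ?_ ?_
        · intro k hk'
          change (⁅h, D⁆ : g →ₗ[ℂ] g) k = 0
          have h1 : ⁅h, k⁆ ∈ H := H.lie_mem hh hk'
          rw [LieHom.lie_apply, hk k hk', hk _ h1]; simp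
        · intro β hβ x hx
          change (⁅h, D⁆ : g →ₗ[ℂ] g) x = 0
          have hDx := hw β x hx
          rw [add_zero] at hDx
          have e1 : ⁅h, x⁆ = β ⟨h, hh⟩ • x := IsKilling.lie_eq_smul_of_mem_rootSpace hx ⟨h, hh⟩
          have e2 : ⁅h, D x⁆ = β ⟨h, hh⟩ • D x :=
            IsKilling.lie_eq_smul_of_mem_rootSpace hDx ⟨h, hh⟩
          rw [LieHom.lie_apply, e1, e2, map_smul, sub_self]
      have := hQ y
      rw [LinearMap.mem_ker, LieHom.lie_apply, sub_eq_zero] at this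
      exact this.symm
    · intro α hα x hx y
      have hE : IsWt H ⁅x, D⁆ α := by
        have := hw.lie hx
        rwa [add_zero] at this
      have hα0 : (α : H → ℂ) ≠ 0 := fun h0 => hα h0
      obtain ⟨a, ha, hEa⟩ := inner_of_isWt ((infH g).lie_mem hD) hE hα0
      obtain ⟨h, hh⟩ : ∃ h : H, α h ≠ 0 := by
        by_contra hc
        push Not at hc
        exact hα0 (funext hc)
      have h1 : ⁅x, D⁆ (h : g) = ad ℂ g a h := by rw [hEa]
      rw [LieHom.lie_apply, hk h h.2, act' hx, ad_apply, act' ha, lie_zero, map_neg, map_smul,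
        zero_sub, neg_neg, ← smul_neg] at h1
      have h2 : D x = -a := smul_right_injective g hh h1
      have h3 : ⁅x, D⁆ y = ad ℂ g a y := by rw [hEa]
      rw [LieHom.lie_apply, ad_apply] at h3
      rw [h2, neg_lie, ← h3]
      abel
  let δ : LieDerivation ℂ g g :=
    { toLinearMap := D
      leibniz' := by
        intro x y
        have := hP x y
        rw [this, ← lie_skew y (D x)]
        abel }
  obtain ⟨a, ha⟩ := LieDerivation.IsKilling.exists_eq_ad δ
  refine ⟨a, ?_⟩
  ext x
  have := congrArg (fun d : LieDerivation ℂ g g => d x) ha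
  simpa [δ] using this.symm

lemma infH_inner (D : g →ₗ[ℂ] g) (hD : D ∈ infH g) : ∃ a, D = ad ℂ g a := by
  obtain ⟨x0, hH⟩ := LieAlgebra.exists_isCartanSubalgebra_engel ℂ g
  set H := LieSubalgebra.engel ℂ x0
  have := infH_induction (H := H) (LinearMap.range (ad ℂ g : g →ₗ[ℂ] Module.End ℂ g)) (by
    intro μ D hD hw
    by_cases hμ : μ = 0
    · subst hμ
      obtain ⟨a, ha⟩ := inner_of_isWt_zero hD hw
      exact ⟨a, ha.symm⟩
    · obtain ⟨a, -, ha⟩ := inner_of_isWt hD hw hμ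
      exact ⟨a, ha.symm⟩) D hD
  obtain ⟨a, ha⟩ := this
  exact ⟨a, ha.symm⟩

end

section
open LieAlgebra

lemma isPolyFun_trace {V : Type*} [AddCommGroup V] [Module ℂ V] [FiniteDimensional ℂ V]
    (L : V →ₗ[ℂ] Module.End ℂ V) (k : ℕ) :
    IsPolyFun fun v => LinearMap.trace ℂ V (L v ^ k) := by
  classical
  let b := Module.finBasis ℂ V
  have key : ∀ k : ℕ, ∀ i j, (fun v => (LinearMap.toMatrix b b (L v ^ k)) i j) ∈
      Algebra.adjoin ℂ (Set.range fun l : V →ₗ[ℂ] ℂ => (l : V → ℂ)) := by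
    intro k
    induction k with
    | zero =>
      intro i j
      simp only [pow_zero, LinearMap.toMatrix_one]
      exact Subalgebra.algebraMap_mem _ ((1 : Matrix _ _ ℂ) i j)
    | succ k ih =>
      intro i j
      have : (fun v => (LinearMap.toMatrix b b (L v ^ (k+1))) i j)
          = ∑ m, (fun v => (LinearMap.toMatrix b b (L v ^ k)) i m) *
            (fun v => (LinearMap.toMatrix b b (L v)) m j) := by
        funext v
        rw [pow_succ, LinearMap.toMatrix_mul, Matrix.mul_apply]
        simp
      rw [this]
      refine Subalgebra.sum_mem _ fun m _ => Subalgebra.mul_mem _ (ih i m) ?_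
      refine Algebra.subset_adjoin ⟨(b.coord m) ∘ₗ (LinearMap.applyₗ (b j)) ∘ₗ L, ?_⟩
      funext v
      simp [LinearMap.toMatrix_apply]
  have : (fun v => LinearMap.trace ℂ V (L v ^ k))
      = ∑ i, (fun v => (LinearMap.toMatrix b b (L v ^ k)) i i) := by
    funext v
    rw [LinearMap.trace_eq_matrix_trace ℂ b]
    simp [Matrix.trace]
  unfold IsPolyFun
  rw [this]
  exact Subalgebra.sum_mem _ fun m _ => key k m m

variable {g : Type*} [LieRing g] [LieAlgebra ℂ g] [FiniteDimensional ℂ g]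

lemma endExp_eq [LieAlgebra ℚ g] (A : Module.End ℂ g) (hA : IsNilpotent A) :
    endExp A = IsNilpotent.exp A := by
  have h0 : A ^ (Module.finrank ℂ g + 1) = 0 := by
    have h := LinearMap.aeval_self_charpoly A
    rw [hA.charpoly_eq_X_pow_finrank] at h
    simp only [map_pow, Polynomial.aeval_X] at h
    rw [pow_succ, h, zero_mul]
  rw [IsNilpotent.exp_eq_sum h0, endExp]
  refine Finset.sum_congr rfl fun k _ => ?_
  ext v
  simp only [LinearMap.smul_apply]
  rw [← Rat.cast_smul_eq_qsmul ℂ]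
  simp

lemma adjointGroup_props (P : g →ₗ[ℂ] g) (hP : ∀ x y : g, P ⁅x, y⁆ = ⁅x, P y⁆)
    (u : g ≃ₗ[ℂ] g) (hu : u ∈ adjointGroup g) :
    (∀ x y, u ⁅x, y⁆ = ⁅u x, u y⁆) ∧ ∀ x, P (u x) = u (P x) := by
  induction hu using Subgroup.closure_induction with
  | mem u hu =>
    obtain ⟨x, hx, hux⟩ := hu
    have hux' : ∀ y, u y = endExp (ad ℂ g x) y := fun y => by rw [← hux]; rfl
    constructor
    · intro y z
      let : Module ℚ g := Module.compHom g (algebraMap ℚ ℂ)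
      let : LieAlgebra ℚ g :=
        { lie_smul := fun t x y => lie_smul (algebraMap ℚ ℂ t) x y }
      have hD : (LieDerivation.ad ℂ g x).toLinearMap = ad ℂ g x := by ext; simp
      have hnil : IsNilpotent (LieDerivation.ad ℂ g x).toLinearMap := by rw [hD]; exact hx
      have e : ∀ y, u y = LieDerivation.exp (LieDerivation.ad ℂ g x) hnil y := by
        intro y
        rw [hux', endExp_eq _ hx, LieDerivation.exp_map_apply, hD]
      rw [e, e, e, LieEquiv.map_lie]
    · intro y
      have hc : ∀ k : ℕ, ∀ y, P ((ad ℂ g x ^ k) y) = (ad ℂ g x ^ k) (P y) := by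
        intro k
        induction k with
        | zero => intro y; rfl
        | succ k ih =>
          intro y
          rw [pow_succ, Module.End.mul_apply, Module.End.mul_apply, ih, ad_apply, ad_apply, hP]
      rw [hux', hux', endExp]
      simp only [LinearMap.sum_apply, LinearMap.smul_apply, map_sum, map_smul, hc]
  | one => exact ⟨fun _ _ => rfl, fun _ => rfl⟩
  | mul a b _ _ ha hb =>
    refine ⟨fun x y => ?_, fun x => ?_⟩
    · simp only [LinearEquiv.mul_apply, hb.1, ha.1]
    · simp only [LinearEquiv.mul_apply, hb.2, ha.2]
  | inv a _ ha =>
    have h1 : ∀ x, a (a⁻¹ x) = x := a.apply_symm_apply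
    refine ⟨fun x y => a.injective ?_, fun x => a.injective ?_⟩
    · rw [ha.1, h1, h1, h1]
    · rw [← ha.2, h1, h1]

lemma trace_ad_pow_invariant (P : g →ₗ[ℂ] g) (hP : ∀ x y : g, P ⁅x, y⁆ = ⁅x, P y⁆)
    (φ : g ≃ₗ[ℂ] g) (hφ : φ ∈ primeGroup (adjointGroup g)) (k : ℕ) (v : g) :
    LinearMap.trace ℂ g (ad ℂ g (P (φ v)) ^ k) = LinearMap.trace ℂ g (ad ℂ g (P v) ^ k) := by
  refine hφ (fun v => LinearMap.trace ℂ g (ad ℂ g (P v) ^ k))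
    (isPolyFun_trace ((ad ℂ g : g →ₗ[ℂ] Module.End ℂ g) ∘ₗ P) k) ?_ v
  intro u hu v
  obtain ⟨h1, h2⟩ := adjointGroup_props P hP u hu
  have : ad ℂ g (P (u v)) = LinearEquiv.conjAlgEquiv ℂ u (ad ℂ g (P v)) := by
    ext z
    simp [h2, LinearEquiv.conjAlgEquiv, h1]
  show LinearMap.trace ℂ g (ad ℂ g (P (u v)) ^ k) = _
  rw [this, ← map_pow]
  exact LinearMap.trace_conj' _ u
end

section
open LieAlgebra

lemma center_simple_zero {g : Type*} [LieRing g] [LieAlgebra ℂ g] (S : LieIdeal ℂ g)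
    [LieAlgebra.IsSimple ℂ S] (x : g) (hx : x ∈ S) (h : ∀ y ∈ S, ⁅x, y⁆ = 0) : x = 0 := by
  have h1 : (⟨x, hx⟩ : S) ∈ LieAlgebra.center ℂ S := by
    rw [LieModule.mem_maxTrivSubmodule]
    intro y
    apply Subtype.ext
    have := h y y.2
    rw [← lie_skew, neg_eq_zero] at this
    exact this
  rw [LieAlgebra.center_eq_bot] at h1
  simpa using congrArg Subtype.val ((LieSubmodule.mem_bot _).1 h1)

lemma lie_disjoint {g : Type*} [LieRing g] [LieAlgebra ℂ g] (S T : LieIdeal ℂ g)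
    (h : Disjoint S.toSubmodule T.toSubmodule) (x y : g) (hx : x ∈ S) (hy : y ∈ T) :
    ⁅x, y⁆ = 0 := by
  refine Submodule.disjoint_def.1 h _ ?_ ?_
  · exact lie_mem_left ℂ g S x y hx
  · exact lie_mem_right ℂ g T x y hy

lemma hasTrivialRadical_of_decomp {g : Type*} [LieRing g] [LieAlgebra ℂ g]
    [FiniteDimensional ℂ g]
    (r : ℕ) (I : Fin r → LieIdeal ℂ g)
    (hsimple : ∀ i, LieAlgebra.IsSimple ℂ (I i))
    (hindep : iSupIndep fun i => ((I i) : LieSubmodule ℂ g g).toSubmodule)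
    (hspan : ⨆ i, ((I i) : LieSubmodule ℂ g g).toSubmodule = ⊤) :
    LieAlgebra.HasTrivialRadical ℂ g := by
  rw [LieAlgebra.hasTrivialRadical_iff_no_abelian_ideals]
  intro A hA
  rw [LieSubmodule.eq_bot_iff]
  intro x hx
  have hcent : ∀ i, ∀ y ∈ I i, ⁅x, y⁆ = 0 := by
    intro i y hy
    have := hsimple i
    have hz : ∀ z ∈ A, z ∈ I i → z = 0 := by
      intro z hz hzi
      rcases LieAlgebra.IsSimple.eq_bot_or_eq_top (R := ℂ) (A.comap (I i).incl) with hb | ht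
      · have : (⟨z, hzi⟩ : I i) ∈ A.comap (I i).incl := by
          simpa [LieIdeal.mem_comap] using hz
        rw [hb] at this
        simpa using congrArg Subtype.val ((LieSubmodule.mem_bot _).1 this)
      · exfalso
        apply LieAlgebra.IsSimple.non_abelian (R := ℂ) (L := I i)
        constructor
        intro a b
        have ha : (a : g) ∈ A := by
          have : a ∈ A.comap (I i).incl := by rw [ht]; trivial
          simpa [LieIdeal.mem_comap] using this
        have hb : (b : g) ∈ A := by
          have : b ∈ A.comap (I i).incl := by rw [ht]; trivial
          simpa [LieIdeal.mem_comap] using this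
        apply Subtype.ext
        have := congrArg Subtype.val (hA.trivial ⟨a, ha⟩ ⟨b, hb⟩)
        simpa using this
    exact hz _ (lie_mem_left ℂ g A x y hx) (lie_mem_right ℂ g (I i) x y hy)
  have hxm : x ∈ ⨆ i ∈ (Finset.univ : Finset (Fin r)),
      ((I i) : LieSubmodule ℂ g g).toSubmodule := by simp [hspan]
  rw [Submodule.mem_iSup_finset_iff_exists_sum] at hxm
  obtain ⟨μ, rfl⟩ := hxm
  refine Finset.sum_eq_zero fun i _ => ?_
  have := hsimple i
  refine center_simple_zero (I i) _ (μ i).2 fun y hy => ?_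
  have := hcent i y hy
  rw [sum_lie, Finset.sum_eq_single i] at this
  · exact this
  · intro j _ hj
    exact lie_disjoint (I j) (I i) (hindep.pairwiseDisjoint hj) _ _ (μ j).2 hy
  · simp

end

section
open LieAlgebra

lemma killing_diag {g : Type*} [LieRing g] [LieAlgebra ℂ g] (x : g) :
    killingForm ℂ g x x = LinearMap.trace ℂ g (ad ℂ g x ^ 2) := by
  rw [pow_two]; rfl

lemma killing_symm {g : Type*} [LieRing g] [LieAlgebra ℂ g] (x y : g) :
    killingForm ℂ g x y = killingForm ℂ g y x := LieModule.traceForm_comm ℂ g g x y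

variable {g : Type*} [LieRing g] [LieAlgebra ℂ g] [FiniteDimensional ℂ g]

lemma killing_polar (P : g →ₗ[ℂ] g) (hP : ∀ x y : g, P ⁅x, y⁆ = ⁅x, P y⁆)
    (φ : g ≃ₗ[ℂ] g) (hφ : φ ∈ primeGroup (adjointGroup g)) (v w : g) :
    killingForm ℂ g (P (φ v)) (P (φ w)) = killingForm ℂ g (P v) (P w) := by
  have h : ∀ v, killingForm ℂ g (P (φ v)) (P (φ v)) = killingForm ℂ g (P v) (P v) := by
    intro v
    rw [killing_diag, killing_diag]
    exact trace_ad_pow_invariant P hP φ hφ 2 v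
  have h1 := h (v + w)
  simp only [map_add, LinearMap.add_apply, h] at h1
  rw [killing_symm (P (φ w)), killing_symm (P w) (P v)] at h1
  linear_combination h1 / 2

lemma killing_disjoint (S T : LieIdeal ℂ g)
    (h : Disjoint S.toSubmodule T.toSubmodule) (x y : g) (hx : x ∈ S) (hy : y ∈ T) :
    killingForm ℂ g x y = 0 := by
  have : (ad ℂ g x) ∘ₗ (ad ℂ g y) = 0 := by
    ext z
    exact lie_disjoint S T h x _ hx (lie_mem_left ℂ g T y z hy)
  show LinearMap.trace ℂ g ((ad ℂ g x) ∘ₗ (ad ℂ g y)) = 0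
  rw [this, map_zero]

lemma killing_nondeg [IsKilling ℂ g] (x : g) (h : ∀ y, killingForm ℂ g x y = 0) : x = 0 := by
  have : x ∈ LinearMap.ker (killingForm ℂ g) := by
    rw [LinearMap.mem_ker]; ext y; exact h y
  rw [IsKilling.ker_killingForm_eq_bot] at this
  exact this

lemma ad_inj [IsKilling ℂ g] (x : g) (h : ∀ y : g, ⁅x, y⁆ = 0) : x = 0 := by
  refine killing_nondeg x fun y => ?_
  have : ad ℂ g x = 0 := by ext z; exact h z
  show LinearMap.trace ℂ g ((ad ℂ g x) ∘ₗ (ad ℂ g y)) = 0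
  rw [this, LinearMap.zero_comp, map_zero]

lemma proj_comm (S T : LieIdeal ℂ g) (h : IsCompl S.toSubmodule T.toSubmodule) (x y : g) :
    S.toSubmodule.projection T.toSubmodule h ⁅x, y⁆
      = ⁅x, S.toSubmodule.projection T.toSubmodule h y⁆ := by
  set π := S.toSubmodule.projection T.toSubmodule h
  have h1 : π y ∈ S := Submodule.projection_apply_mem h y
  have h2 : y - π y ∈ T := Submodule.sub_projection_mem h y
  have e : ⁅x, y⁆ = ⁅x, π y⁆ + ⁅x, y - π y⁆ := by rw [← lie_add]; simp
  rw [e, map_add]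
  have e1 : π ⁅x, π y⁆ = ⁅x, π y⁆ :=
    Submodule.projection_apply_of_mem_left h (lie_mem_right ℂ g S x _ h1)
  have e2 : π ⁅x, y - π y⁆ = 0 :=
    (Submodule.projection_apply_eq_zero_iff h).2 (lie_mem_right ℂ g T x _ h2)
  rw [e1, e2, add_zero]

variable [IsKilling ℂ g]

lemma map_T (S T : LieIdeal ℂ g) (h : IsCompl S.toSubmodule T.toSubmodule)
    (φ : g ≃ₗ[ℂ] g) (hφ : φ ∈ primeGroup (adjointGroup g)) (x : g) (hx : x ∈ T) : φ x ∈ T := by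
  have key := killing_polar _ (proj_comm S T h) φ hφ
  set π := S.toSubmodule.projection T.toSubmodule h with hπ
  have hx0 : π x = 0 := (Submodule.projection_apply_eq_zero_iff h).2 hx
  refine (Submodule.projection_apply_eq_zero_iff h).1 (killing_nondeg (π (φ x)) fun y => ?_)
  have h1 : π (φ x) ∈ S := Submodule.projection_apply_mem h _
  have h2 : y - π y ∈ T := Submodule.sub_projection_mem h y
  have e := killing_disjoint S T h.disjoint _ _ h1 h2
  rw [map_sub, sub_eq_zero] at e
  rw [e]
  have := key x (φ.symm y)
  rw [hx0, φ.apply_symm_apply] at this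
  rw [this]; simp

lemma killing_phi (φ : g ≃ₗ[ℂ] g) (hφ : φ ∈ primeGroup (adjointGroup g)) (v w : g) :
    killingForm ℂ g (φ v) (φ w) = killingForm ℂ g v w :=
  killing_polar LinearMap.id (fun _ _ => rfl) φ hφ v w

lemma mem_S_of_perp (S T : LieIdeal ℂ g) (h : IsCompl S.toSubmodule T.toSubmodule) (z : g)
    (hz : ∀ t ∈ T, killingForm ℂ g z t = 0) : z ∈ S := by
  set π := S.toSubmodule.projection T.toSubmodule h with hπ
  have h1 : π z ∈ S := Submodule.projection_apply_mem h _
  have h2 : z - π z ∈ T := Submodule.sub_projection_mem h z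
  have : z - π z = 0 := by
    refine killing_nondeg _ fun y => ?_
    have h3 : π y ∈ S := Submodule.projection_apply_mem h _
    have h4 : y - π y ∈ T := Submodule.sub_projection_mem h y
    have e1 := killing_disjoint S T h.disjoint _ _ h3 h2
    have e2 := killing_disjoint S T h.disjoint _ _ h1 h4
    have e3 := hz _ h4
    rw [killing_symm] at e1
    have e4 : y = π y + (y - π y) := by abel
    have e5 : killingForm ℂ g (z - π z) (y - π y) = 0 := by
      rw [LinearMap.map_sub (killingForm ℂ g) z, LinearMap.sub_apply, e2, e3, sub_zero]
    rw [e4, map_add, e1, e5, add_zero]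
  rw [sub_eq_zero] at this
  rw [this]; exact h1

lemma map_S (S T : LieIdeal ℂ g) (h : IsCompl S.toSubmodule T.toSubmodule)
    (φ : g ≃ₗ[ℂ] g) (hφ : φ ∈ primeGroup (adjointGroup g)) (x : g) (hx : x ∈ S) : φ x ∈ S := by
  refine mem_S_of_perp S T h _ fun t ht => ?_
  have hi : φ.symm ∈ primeGroup (adjointGroup g) := inv_mem hφ
  have := killing_phi φ hφ x (φ.symm t)
  rw [φ.apply_symm_apply] at this
  rw [this]
  exact killing_disjoint S T h.disjoint _ _ hx (map_T S T h _ hi t ht)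

lemma main_ideal (S T : LieIdeal ℂ g) [hS : LieAlgebra.IsSimple ℂ S]
    (h : IsCompl S.toSubmodule T.toSubmodule)
    (φ : g ≃ₗ[ℂ] g) (hφ : φ ∈ primeGroup (adjointGroup g)) :
    ∃ c : ℂ, (c = 1 ∨ c = -1) ∧ ∀ x ∈ S, ∀ y ∈ S, φ ⁅x, y⁆ = c • ⁅φ x, φ y⁆ := by
  have htr := trace_ad_pow_invariant LinearMap.id (fun _ _ => rfl) φ hφ
  have hψ : ∀ x : g, ∃ a : g,
      (φ : g →ₗ[ℂ] g) ∘ₗ (ad ℂ g x : g →ₗ[ℂ] g) ∘ₗ (φ.symm : g →ₗ[ℂ] g) = ad ℂ g a :=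
    fun x => infH_inner _ (conj_mem_infH φ (fun v k => htr k v) x)
  choose ψ hψ using hψ
  have hb : ∀ x y : g, φ ⁅x, y⁆ = ⁅ψ x, φ y⁆ := by
    intro x y
    have := LinearMap.congr_fun (hψ x) (φ y)
    simpa using this
  have hb' : ∀ x y, ⁅ψ x, y⁆ = φ ⁅x, φ.symm y⁆ := by
    intro x y; rw [hb, φ.apply_symm_apply]
  have hadd : ∀ x y, ψ (x + y) = ψ x + ψ y := by
    intro x y
    rw [← sub_eq_zero]
    refine ad_inj _ fun z => ?_
    simp only [sub_lie, add_lie, hb', map_add, sub_self]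
  have hsm : ∀ (c : ℂ) x, ψ (c • x) = c • ψ x := by
    intro c x
    rw [← sub_eq_zero]
    refine ad_inj _ fun z => ?_
    simp only [sub_lie, smul_lie, hb', map_smul, sub_self]
  have hlie : ∀ x y, ψ ⁅x, y⁆ = ⁅ψ x, ψ y⁆ := by
    intro x y
    rw [← sub_eq_zero]
    refine ad_inj _ fun z => ?_
    rw [sub_lie, lie_lie, hb', hb', hb', hb', hb', φ.symm_apply_apply, φ.symm_apply_apply,
      lie_lie, map_sub, sub_self]
  have hκ : ∀ x y, killingForm ℂ g (ψ x) (ψ y) = killingForm ℂ g x y := by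
    intro x y
    show LinearMap.trace ℂ g ((ad ℂ g (ψ x)) ∘ₗ (ad ℂ g (ψ y))) = _
    have : (ad ℂ g (ψ x) : g →ₗ[ℂ] g) ∘ₗ (ad ℂ g (ψ y) : g →ₗ[ℂ] g)
        = φ.conj ((ad ℂ g x) ∘ₗ (ad ℂ g y)) := by
      ext z
      simp [hb', LinearEquiv.conj_apply]
    rw [this, LinearMap.trace_conj']
    rfl
  -- the centroid element
  let C : g →ₗ[ℂ] g :=
    { toFun := fun x => φ.symm (ψ x)
      map_add' := fun x y => by rw [hadd, map_add]
      map_smul' := fun c x => by rw [hsm, map_smul]; rfl }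
  have hC : ∀ x, C x = φ.symm (ψ x) := fun _ => rfl
  have hClie : ∀ x y : g, C ⁅x, y⁆ = ⁅x, C y⁆ := by
    intro x y
    rw [hC, hC, hlie, hb', φ.symm_apply_apply]
  have hCS : ∀ x ∈ S, C x ∈ S := by
    intro x hx
    have h2 : C x - S.toSubmodule.projection T.toSubmodule h (C x) ∈ T :=
      Submodule.sub_projection_mem h (C x)
    have h1 : S.toSubmodule.projection T.toSubmodule h (C x) ∈ S :=
      Submodule.projection_apply_mem h _
    have : C x - S.toSubmodule.projection T.toSubmodule h (C x) = 0 := by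
      refine ad_inj _ fun y => ?_
      have e : ⁅C x, y⁆ ∈ S := by
        rw [← lie_skew, ← hClie, ← lie_skew, map_neg, neg_neg, hClie]
        exact lie_mem_left ℂ g S x _ hx
      refine Submodule.disjoint_def.1 h.disjoint _ ?_ (lie_mem_left ℂ g T _ y h2)
      rw [sub_lie]
      exact S.toSubmodule.sub_mem e (lie_mem_left ℂ g S _ y h1)
    rw [sub_eq_zero] at this
    rw [this]; exact h1
  have hnt : Nontrivial S := LieAlgebra.IsSimple.nontrivial ℂ S
  let CS : Module.End ℂ S := C.restrict (p := S.toSubmodule) (q := S.toSubmodule) hCS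
  obtain ⟨c, hc⟩ := Module.End.exists_eigenvalue CS
  let E : LieIdeal ℂ S :=
    { Module.End.eigenspace CS c with
      lie_mem := by
        intro x m hm
        have hm' : m ∈ Module.End.eigenspace CS c := hm
        show ⁅x, m⁆ ∈ Module.End.eigenspace CS c
        rw [Module.End.mem_eigenspace_iff] at hm' ⊢
        apply Subtype.ext
        have h1 : C (m : g) = c • (m : g) := congrArg Subtype.val hm'
        show C ⁅(x : g), (m : g)⁆ = c • ⁅(x : g), (m : g)⁆
        rw [hClie, h1, lie_smul] }
  have hE : E = ⊤ := by
    rcases LieAlgebra.IsSimple.eq_bot_or_eq_top (R := ℂ) E with hE | hE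
    · exfalso
      obtain ⟨v, hv⟩ := hc.exists_hasEigenvector
      have : v ∈ E := hv.1
      rw [hE] at this
      exact hv.2 ((LieSubmodule.mem_bot _).1 this)
    · exact hE
  have hCc : ∀ x ∈ S, ψ x = c • φ x := by
    intro x hx
    have : (⟨x, hx⟩ : S) ∈ E := by rw [hE]; trivial
    have h1 : (⟨x, hx⟩ : S) ∈ Module.End.eigenspace CS c := this
    rw [Module.End.mem_eigenspace_iff] at h1
    have h2 : C x = c • x := congrArg Subtype.val h1
    rw [hC] at h2
    rw [← map_smul, ← h2, φ.apply_symm_apply]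
  refine ⟨c, ?_, fun x hx y _ => by rw [hb, hCc x hx, smul_lie]⟩
  -- find x y in S with nonzero Killing pairing
  have hex : ∃ x ∈ S, ∃ y ∈ S, killingForm ℂ g x y ≠ 0 := by
    by_contra hcon
    push Not at hcon
    obtain ⟨s, hs⟩ := exists_ne (0 : S)
    apply hs
    apply Subtype.ext
    refine killing_nondeg (s : g) fun y => ?_
    have h3 : S.toSubmodule.projection T.toSubmodule h y ∈ S :=
      Submodule.projection_apply_mem h _
    have h4 : y - S.toSubmodule.projection T.toSubmodule h y ∈ T :=
      Submodule.sub_projection_mem h y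
    have e := killing_disjoint S T h.disjoint _ _ s.2 h4
    rw [map_sub, hcon _ s.2 _ h3, sub_zero] at e
    exact e
  obtain ⟨x, hx, y, hy, hxy⟩ := hex
  have h1 := hκ x y
  rw [hCc x hx, hCc y hy] at h1
  simp only [map_smul, LinearMap.smul_apply, killing_phi φ hφ, smul_eq_mul] at h1
  have h2 : c ^ 2 = 1 := by
    apply mul_right_cancel₀ hxy
    linear_combination h1
  exact (sq_eq_one_iff (a := c)).1 h2
end

/-- Let `g` be a complex semisimple Lie algebra with decomposition
`g = g₁ ⊕ ⋯ ⊕ g_r` into simple ideals, let `G = Aut(g)⁰` be its adjoint group acting on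
`V = g`, and let `φ ∈ G'`.  Then `φ(gᵢ) = gᵢ` for every `i`, and the restriction of `φ`
to `gᵢ` equals `εᵢ • σᵢ` where `εᵢ ∈ {1, -1}` and `σᵢ` is a Lie algebra automorphism
of `gᵢ`. -/
theorem stmt0 (g : Type) [LieRing g] [LieAlgebra ℂ g] [FiniteDimensional ℂ g]
    (r : ℕ) (I : Fin r → LieIdeal ℂ g)
    (hsimple : ∀ i, LieAlgebra.IsSimple ℂ (I i))
    (hindep : iSupIndep fun i => ((I i) : LieSubmodule ℂ g g).toSubmodule)
    (hspan : ⨆ i, ((I i) : LieSubmodule ℂ g g).toSubmodule = ⊤)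
    (φ : g ≃ₗ[ℂ] g) (hφ : φ ∈ primeGroup (adjointGroup g)) :
    ∀ i : Fin r,
      (((I i) : LieSubmodule ℂ g g).toSubmodule.map (φ : g →ₗ[ℂ] g)
          = ((I i) : LieSubmodule ℂ g g).toSubmodule) ∧
      ∃ (ε : ℂ) (σ : (I i) ≃ₗ⁅ℂ⁆ (I i)), (ε = 1 ∨ ε = -1) ∧
        ∀ x : (I i), φ (x : g) = ε • ((σ x : (I i)) : g) := by
  have hT : LieAlgebra.HasTrivialRadical ℂ g := hasTrivialRadical_of_decomp r I hsimple hindep hspan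
  intro i
  have := hsimple i
  let T : LieIdeal ℂ g := ⨆ j, ⨆ (_ : j ≠ i), I j
  have hTs : T.toSubmodule = ⨆ j, ⨆ (_ : j ≠ i), (I j).toSubmodule := by
    simp only [T, LieSubmodule.iSup_toSubmodule]
  have hcompl : IsCompl (I i).toSubmodule T.toSubmodule := by
    rw [hTs]
    refine ⟨hindep i, ?_⟩
    rw [codisjoint_iff, eq_top_iff, ← hspan]
    refine iSup_le fun j => ?_
    by_cases hj : j = i
    · subst hj; exact le_sup_left
    · exact le_sup_of_le_right (le_iSup₂_of_le j hj le_rfl)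
  have hφi : φ.symm ∈ primeGroup (adjointGroup g) := inv_mem hφ
  have hm := map_S (I i) T hcompl φ hφ
  have hmi := map_S (I i) T hcompl φ.symm hφi
  refine ⟨?_, ?_⟩
  · apply le_antisymm
    · rintro _ ⟨x, hx, rfl⟩
      exact hm x hx
    · intro x hx
      exact ⟨φ.symm x, hmi x hx, φ.apply_symm_apply x⟩
  · obtain ⟨c, hc, hcl⟩ := main_ideal (I i) T hcompl φ hφ
    have hcc : c * c = 1 := by rcases hc with rfl | rfl <;> norm_num
    refine ⟨c, { toFun := fun x => ⟨c • φ x, (I i).toSubmodule.smul_mem c (hm x x.2)⟩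
                 map_add' := ?_
                 map_smul' := ?_
                 map_lie' := ?_
                 invFun := fun x => ⟨c • φ.symm x, (I i).toSubmodule.smul_mem c (hmi x x.2)⟩
                 left_inv := ?_
                 right_inv := ?_ }, hc, ?_⟩
    · intro x y; apply Subtype.ext; simp
    · intro a x; apply Subtype.ext; simp [smul_comm c a]
    · intro x y
      apply Subtype.ext
      have := hcl x x.2 y y.2
      simp [this]
    · intro x; apply Subtype.ext; simp [smul_smul, hcc]
    · intro x; apply Subtype.ext; simp [smul_smul, hcc]
    · intro x
      show φ (x : g) = c • (c • φ (x : g))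
      rw [smul_smul, hcc, one_smul]
end
end

section
/- Let g be a complex simple Lie algebra, G = Aut(g)⁰ its adjoint group acting on g, and t ⊆ g a fixed Cartan subalgebra. For every φ ∈ G' there exists an element g ∈ G such that (g ∘ φ) restricted to t is the identity map on t. -/
noncomputable section

set_option linter.unusedSectionVars false
open Topology Filter


section poly
variable {V : Type*} [AddCommGroup V] [Module ℂ V]

lemma isPolyFun_const (c : ℂ) : IsPolyFun (fun _ : V => c) :=
  Subalgebra.algebraMap_mem (Algebra.adjoin ℂ (Set.range fun l : V →ₗ[ℂ] ℂ => (l : V → ℂ))) c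

lemma isPolyFun_linear (l : V →ₗ[ℂ] ℂ) : IsPolyFun (fun v => l v) :=
  Algebra.subset_adjoin ⟨l, rfl⟩

lemma IsPolyFun.add' {f g : V → ℂ} (hf : IsPolyFun f) (hg : IsPolyFun g) :
    IsPolyFun (fun v => f v + g v) := Subalgebra.add_mem _ hf hg

lemma IsPolyFun.mul' {f g : V → ℂ} (hf : IsPolyFun f) (hg : IsPolyFun g) :
    IsPolyFun (fun v => f v * g v) := Subalgebra.mul_mem _ hf hg

lemma IsPolyFun.sub' {f g : V → ℂ} (hf : IsPolyFun f) (hg : IsPolyFun g) :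
    IsPolyFun (fun v => f v - g v) := Subalgebra.sub_mem _ hf hg

lemma IsPolyFun.sum' {ι : Type*} {s : Finset ι} {f : ι → V → ℂ}
    (hf : ∀ i ∈ s, IsPolyFun (f i)) : IsPolyFun (fun v => ∑ i ∈ s, f i v) := by
  have : (fun v => ∑ i ∈ s, f i v) = ∑ i ∈ s, f i := by ext v; simp
  rw [this]
  exact Subalgebra.sum_mem _ hf

lemma IsPolyFun.prod' {ι : Type*} {s : Finset ι} {f : ι → V → ℂ}
    (hf : ∀ i ∈ s, IsPolyFun (f i)) : IsPolyFun (fun v => ∏ i ∈ s, f i v) := by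
  have : (fun v => ∏ i ∈ s, f i v) = ∏ i ∈ s, f i := by ext v; simp
  rw [this]
  exact Subalgebra.prod_mem _ hf

lemma IsPolyFun.ind {P : (V → ℂ) → Prop} {f : V → ℂ} (hf : IsPolyFun f)
    (hc : ∀ c : ℂ, P (fun _ => c)) (hl : ∀ l : V →ₗ[ℂ] ℂ, P (fun v => l v))
    (ha : ∀ f g, P f → P g → P (fun v => f v + g v))
    (hm : ∀ f g, P f → P g → P (fun v => f v * g v)) : P f := by
  induction hf using Algebra.adjoin_induction with
  | mem x hx => obtain ⟨l, rfl⟩ := hx; exact hl l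
  | algebraMap r => exact hc r
  | add x y _ _ hx hy => exact ha _ _ hx hy
  | mul x y _ _ hx hy => exact hm _ _ hx hy

lemma IsPolyFun.line {f : V → ℂ} (hf : IsPolyFun f) (a v : V) :
    ∃ q : Polynomial ℂ, ∀ z : ℂ, f (a + z • v) = q.eval z := by
  refine IsPolyFun.ind (P := fun f => ∃ q : Polynomial ℂ, ∀ z : ℂ, f (a + z • v) = q.eval z)
    hf (fun c => ⟨Polynomial.C c, by simp⟩)
    (fun l => ⟨Polynomial.C (l a) + Polynomial.C (l v) * Polynomial.X, fun z => by simp; ring⟩) ?_ ?_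
  · rintro f g ⟨p, hp⟩ ⟨q, hq⟩
    exact ⟨p + q, by simp [hp, hq]⟩
  · rintro f g ⟨p, hp⟩ ⟨q, hq⟩
    exact ⟨p * q, by simp [hp, hq]⟩

lemma IsPolyFun.comp_linear {W : Type*} [AddCommGroup W] [Module ℂ W] {f : V → ℂ}
    (hf : IsPolyFun f) (e : W →ₗ[ℂ] V) : IsPolyFun (fun w => f (e w)) := by
  refine IsPolyFun.ind (P := fun f => IsPolyFun (fun w => f (e w))) hf
    (fun c => isPolyFun_const c) (fun l => isPolyFun_linear (l ∘ₗ e)) ?_ ?_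
  · intro f g hf hg; exact hf.add' hg
  · intro f g hf hg; exact hf.mul' hg

lemma IsPolyFun.comp_affine {f : V → ℂ} (hf : IsPolyFun f) (a : V) :
    IsPolyFun (fun w => f (w - a)) := by
  refine IsPolyFun.ind (P := fun f => IsPolyFun (fun w => f (w - a))) hf
    (fun c => isPolyFun_const c) (fun l => ?_) ?_ ?_
  · simp only [map_sub]
    exact (isPolyFun_linear l).sub' (isPolyFun_const _)
  · intro f g hf hg; exact hf.add' hg
  · intro f g hf hg; exact hf.mul' hg

lemma isPolyFun_mvPoly {ι : Type*} [Finite ι] (b : Module.Basis ι ℂ V)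
    (p : MvPolynomial ι ℂ) : IsPolyFun (fun v => MvPolynomial.eval (b.repr v) p) := by
  induction p using MvPolynomial.induction_on with
  | C a => simpa using isPolyFun_const a
  | add p q hp hq => simpa using hp.add' hq
  | mul_X p i hp =>
    simpa using hp.mul' (isPolyFun_linear (b.coord i))

lemma isPolyFun_multilinear [FiniteDimensional ℂ V] {k : ℕ}
    (p : MultilinearMap ℂ (fun _ : Fin k => V) ℂ) : IsPolyFun (fun v => p (fun _ => v)) := by
  let b := Module.finBasis ℂ V
  have : (fun v => p (fun _ => v)) = fun v => ∑ r : Fin k → Fin (Module.finrank ℂ V),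
      (∏ i : Fin k, b.repr v (r i)) * p (fun i => b (r i)) := by
    ext v
    conv_lhs => rw [← b.sum_repr v]
    rw [MultilinearMap.map_sum]
    refine Finset.sum_congr rfl fun r _ => ?_
    rw [MultilinearMap.map_smul_univ]
    rfl
  rw [this]
  refine IsPolyFun.sum' fun r _ => IsPolyFun.mul' ?_ (isPolyFun_const _)
  exact IsPolyFun.prod' fun i _ => isPolyFun_linear (b.coord (r i))

end poly

section analysis
variable {V : Type*} [NormedAddCommGroup V] [NormedSpace ℂ V] [FiniteDimensional ℂ V]

lemma IsPolyFun.continuous' {f : V → ℂ} (hf : IsPolyFun f) : Continuous f := by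
  refine IsPolyFun.ind hf (fun c => continuous_const) (fun l => ?_)
    (fun f g hf hg => hf.add hg) (fun f g hf hg => hf.mul hg)
  exact l.continuous_of_finiteDimensional

lemma IsPolyFun.analytic' {f : V → ℂ} (hf : IsPolyFun f) (x : V) : AnalyticAt ℂ f x := by
  refine IsPolyFun.ind (P := fun f => AnalyticAt ℂ f x) hf (fun c => analyticAt_const) (fun l => ?_)
    (fun f g hf hg => hf.add hg) (fun f g hf hg => hf.mul hg)
  exact (LinearMap.toContinuousLinearMap l).analyticAt x

lemma line_finite {D : V → ℂ} (hD : IsPolyFun D) (a v : V) (z₀ : ℂ) (h : D (a + z₀ • v) ≠ 0) :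
    {z : ℂ | D (a + z • v) = 0}.Finite := by
  obtain ⟨q, hq⟩ := hD.line a v
  have : q ≠ 0 := by rintro rfl; exact h (by simp [hq])
  refine (Polynomial.finite_setOfPred_isRoot this).subset fun z hz => ?_
  simpa [Polynomial.IsRoot, ← hq] using hz

lemma reg_preconnected {D : V → ℂ} (hD : IsPolyFun D) : IsPreconnected {y | D y ≠ 0} := by
  refine isPreconnected_of_forall_pair fun a ha b hb => ?_
  have hfin := line_finite hD a (b - a) 0 (by simpa using ha)
  have hrank : 1 < Module.rank ℝ ℂ := by simp
  have hc := (hfin.countable.isPathConnected_compl_of_one_lt_rank hrank).isConnected.isPreconnected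
  refine ⟨(fun z : ℂ => a + z • (b - a)) '' {z : ℂ | D (a + z • (b - a)) = 0}ᶜ, ?_, ⟨0, ?_, by simp⟩,
    ⟨1, ?_, by simp⟩, hc.image _ (by fun_prop)⟩
  · rintro _ ⟨z, hz, rfl⟩; exact hz
  · simpa using ha
  · simpa using hb

lemma reg_dense {D : V → ℂ} (hD : IsPolyFun D) (x₀ : V) (h0 : D x₀ ≠ 0) :
    Dense {y | D y ≠ 0} := by
  intro a
  have hfin := line_finite hD a (x₀ - a) 1 (by simpa using h0)
  have hd : Dense ({z : ℂ | D (a + z • (x₀ - a)) = 0}ᶜ) := hfin.countable.dense_compl ℝ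
  have hcont : Continuous (fun z : ℂ => a + z • (x₀ - a)) := by fun_prop
  have := hcont.range_subset_closure_image_dense hd
  have h2 : a ∈ closure ((fun z : ℂ => a + z • (x₀ - a)) '' {z : ℂ | D (a + z • (x₀ - a)) = 0}ᶜ) :=
    this ⟨0, by simp⟩
  refine closure_mono ?_ h2
  rintro _ ⟨z, hz, rfl⟩; exact hz

/-- An entire function of polynomial growth is a polynomial of bounded degree. -/
lemma entire_growth {q : ℂ → ℂ} (hq : Differentiable ℂ q) {C : ℝ} {d : ℕ}
    (hb : ∀ z, ‖q z‖ ≤ C * (1 + ‖z‖) ^ d) (k : ℕ) (hk : d < k) : iteratedDeriv k q 0 = 0 := by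
  have hC : 0 ≤ C := by
    have := hb 0
    simp at this
    exact (norm_nonneg _).trans this
  have key : ∀ R : ℝ, 1 ≤ R → ‖iteratedDeriv k q 0‖ ≤ (k.factorial * (C * 2 ^ d)) / R := by
    intro R hR
    have hR0 : 0 < R := by linarith
    have := Complex.norm_iteratedDeriv_le_of_forall_mem_sphere_norm_le (c := 0) (f := q)
      (C := C * (1 + R) ^ d) k hR0 hq.diffContOnCl (by
        intro z hz
        have : ‖z‖ = R := by simpa using hz
        rw [← this]; exact hb z)
    refine this.trans ?_
    rw [div_le_div_iff₀ (by positivity) hR0]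
    have h1 : (1 + R) ^ d ≤ 2 ^ d * R ^ d := by
      rw [← mul_pow]; gcongr; linarith
    have h2 : R ^ d * R ≤ R ^ k := by
      rw [← pow_succ]; exact pow_le_pow_right₀ hR hk
    calc k.factorial * (C * (1 + R) ^ d) * R ≤ k.factorial * (C * (2 ^ d * R ^ d)) * R := by gcongr
      _ = k.factorial * (C * 2 ^ d) * (R ^ d * R) := by ring
      _ ≤ _ := by gcongr
  have hlim : Tendsto (fun R : ℝ => (k.factorial * (C * 2 ^ d)) / R) atTop (𝓝 0) :=
    tendsto_const_nhds.div_atTop tendsto_id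
  have : ‖iteratedDeriv k q 0‖ ≤ 0 := by
    refine ge_of_tendsto hlim ?_
    filter_upwards [eventually_ge_atTop 1] with R hR using key R hR
  simpa using this

/-- Removable singularities on a line. -/
lemma aux_removable {q : ℂ → ℂ} {S : Set ℂ} (hS : S.Finite) (hq : ∀ z ∉ S, DifferentiableAt ℂ q z)
    {C : ℝ} {d : ℕ} (hb : ∀ z ∉ S, ‖q z‖ ≤ C * (1 + ‖z‖) ^ d) :
    ∃ r : ℂ → ℂ, Differentiable ℂ r ∧ (∀ z ∉ S, r z = q z) ∧ ∀ z, ‖r z‖ ≤ C * (1 + ‖z‖) ^ d := by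
  let r : ℂ → ℂ := fun z => limUnder (𝓝[≠] z) q
  have hr : ∀ z ∉ S, r z = q z := by
    intro z hz
    have : Tendsto q (𝓝[≠] z) (𝓝 (q z)) := (hq z hz).continuousAt.tendsto.mono_left nhdsWithin_le_nhds
    exact this.limUnder_eq
  have hSev : ∀ z, ∀ᶠ w in 𝓝[≠] z, w ∉ S := by
    intro z
    have : (S \ {z})ᶜ ∈ 𝓝 z := (hS.subset Set.sdiff_subset).isClosed.isOpen_compl.mem_nhds (by simp)
    filter_upwards [nhdsWithin_le_nhds this, self_mem_nhdsWithin] with w hw hw' hwS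
    exact hw ⟨hwS, hw'⟩
  have hdiff : Differentiable ℂ r := by
    intro z
    have hev : ∀ᶠ w in 𝓝 z, w ≠ z → w ∉ S := eventually_nhdsWithin_iff.mp (hSev z)
    obtain ⟨U, hU, hUo, hzU⟩ := eventually_nhds_iff.mp hev
    obtain ⟨ε, hε, hball⟩ := Metric.isOpen_iff.mp hUo z hzU
    have hd : DifferentiableOn ℂ q (Metric.ball z ε \ {z}) := by
      intro w hw
      exact (hq w (hU w (hball hw.1) hw.2)).differentiableWithinAt
    have hbd : BddAbove (norm ∘ q '' (Metric.ball z ε \ {z})) := by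
      refine ⟨|C| * (1 + (‖z‖ + ε)) ^ d, ?_⟩
      rintro _ ⟨w, hw, rfl⟩
      refine (hb w (hU w (hball hw.1) hw.2)).trans ?_
      have : ‖w‖ ≤ ‖z‖ + ε := by
        have h1 : ‖w - z‖ < ε := by simpa [dist_eq_norm] using hw.1
        have := norm_add_le (w - z) z
        rw [sub_add_cancel] at this; linarith
      have := le_abs_self C
      gcongr
    have := Complex.differentiableOn_update_limUnder_of_bddAbove (Metric.ball_mem_nhds z hε) hd hbd
    have h2 := this.differentiableAt (Metric.ball_mem_nhds z hε)
    refine h2.congr_of_eventuallyEq ?_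
    filter_upwards [Metric.ball_mem_nhds z hε] with w hw
    by_cases hwz : w = z
    · subst hwz; simp [r]
    · rw [Function.update_of_ne hwz]
      exact hr w (hU w (hball hw) hwz)
  refine ⟨r, hdiff, hr, ?_⟩
  have hdense : Dense (Sᶜ) := hS.countable.dense_compl ℝ
  have hclosed : IsClosed {z | ‖r z‖ ≤ C * (1 + ‖z‖) ^ d} :=
    isClosed_le hdiff.continuous.norm (by fun_prop)
  intro z
  have hsub : Sᶜ ⊆ {z | ‖r z‖ ≤ C * (1 + ‖z‖) ^ d} := by
    intro w hw
    show ‖r w‖ ≤ _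
    rw [hr w hw]; exact hb w hw
  exact hclosed.closure_subset_iff.mpr hsub (hdense z)

lemma aux_extend {D : V → ℂ} (hD : IsPolyFun D) (x₀ : V) (h0 : D x₀ ≠ 0) {F : V → ℂ}
    (hF : ∀ y, D y ≠ 0 → AnalyticAt ℂ F y) {C : ℝ} {d : ℕ}
    (hb : ∀ y, D y ≠ 0 → ‖F y‖ ≤ C * (1 + ‖y‖) ^ d) :
    ∃ Q : V → ℂ, IsPolyFun Q ∧ ∀ y, D y ≠ 0 → Q y = F y := by
  obtain ⟨p, hp⟩ := hF x₀ h0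
  refine ⟨fun y => ∑ k ∈ Finset.range (d + 1), p k (fun _ => y - x₀), ?_, ?_⟩
  · refine IsPolyFun.sum' fun k _ => ?_
    exact IsPolyFun.comp_affine (isPolyFun_multilinear (p k).toMultilinearMap) x₀
  intro y hy
  set v := y - x₀ with hv
  let q : ℂ → ℂ := fun z => F (x₀ + z • v)
  let S : Set ℂ := {z : ℂ | D (x₀ + z • v) = 0}
  have hS : S.Finite := line_finite hD x₀ v 0 (by simpa using h0)
  have hC : 0 ≤ C := by
    by_contra hC
    have h1 := hb x₀ h0
    have : 0 < (1 + ‖x₀‖) ^ d := by positivity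
    have := norm_nonneg (F x₀)
    nlinarith
  have hqd : ∀ z ∉ S, DifferentiableAt ℂ q z := by
    intro z hz
    have h1 : DifferentiableAt ℂ F (x₀ + z • v) := (hF _ hz).differentiableAt
    exact h1.comp z (by fun_prop)
  have hqb : ∀ z ∉ S, ‖q z‖ ≤ (C * (1 + ‖x₀‖ + ‖v‖) ^ d) * (1 + ‖z‖) ^ d := by
    intro z hz
    refine (hb _ hz).trans ?_
    rw [mul_assoc, ← mul_pow]
    have h1 : ‖x₀ + z • v‖ ≤ ‖x₀‖ + ‖z‖ * ‖v‖ := (norm_add_le _ _).trans (by rw [norm_smul])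
    gcongr
    nlinarith [norm_nonneg x₀, norm_nonneg v, norm_nonneg z,
      mul_nonneg (norm_nonneg x₀) (norm_nonneg z)]
  obtain ⟨r, hrd, hrq, hrb⟩ := aux_removable hS hqd hqb
  let P : FormalMultilinearSeries ℂ ℂ ℂ :=
    fun k => ContinuousMultilinearMap.mkPiRing ℂ (Fin k) (p k (fun _ => v))
  have hPc : ∀ k, P.coeff k = p k (fun _ => v) := by
    intro k; simp [P, FormalMultilinearSeries.coeff]
  have hser' : ∀ᶠ z in 𝓝 (0:ℂ), HasSum (fun n => z ^ n • P.coeff n) (r (0 + z)) := by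
    have h0S : (0 : ℂ) ∉ S := by simpa [S] using h0
    have hev : ∀ᶠ z : ℂ in 𝓝 0, z ∉ S := hS.isClosed.isOpen_compl.mem_nhds h0S
    have hsum := hp.eventually_hasSum
    have ht : Tendsto (fun z : ℂ => z • v) (𝓝 0) (𝓝 0) := by
      have : Continuous (fun z : ℂ => z • v) := by fun_prop
      simpa using this.tendsto 0
    filter_upwards [hev, ht.eventually hsum] with z hz hz2
    rw [zero_add, hrq z hz]
    have hfun : (fun n => z ^ n • P.coeff n) = fun n => (p n) fun _ => z • v := by
      ext k
      rw [hPc]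
      simp [ContinuousMultilinearMap.map_smul_univ]
    rw [hfun]
    exact hz2
  have hcoeff : ∀ k, p k (fun _ => v) = iteratedDeriv k r 0 / k.factorial := by
    intro k
    have h1 := (hrd.analyticAt 0).hasFPowerSeriesAt
    have h2 := (hasFPowerSeriesAt_iff.mpr hser').eq_formalMultilinearSeries h1
    rw [← hPc, h2, FormalMultilinearSeries.coeff_ofScalars]
  have hy1 : x₀ + (1:ℂ) • v = y := by simp [hv]
  have h1S : (1 : ℂ) ∉ S := by
    show ¬ (D (x₀ + (1:ℂ) • v) = 0)
    rw [hy1]; exact hy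
  have hr1 : r 1 = F y := by rw [hrq 1 h1S]; simp only [q]; rw [hy1]
  rw [← hr1]
  have ht := Complex.hasSum_taylorSeries_of_entire hrd 0 1
  simp only [sub_zero, one_pow, one_smul] at ht
  rw [← ht.tsum_eq, tsum_eq_sum (s := Finset.range (d+1))]
  · refine Finset.sum_congr rfl fun k _ => ?_
    rw [hcoeff]; simp [div_eq_inv_mul]
  · intro k hk
    rw [entire_growth hrd hrb k (by simpa using hk)]
    simp

end analysis

set_option linter.unusedSectionVars false
open Topology Filter
open scoped ContDiff

section chart
variable {V : Type*} [NormedAddCommGroup V] [NormedSpace ℂ V] [FiniteDimensional ℂ V]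

/-- bilinear map as continuous bilinear map -/
def cbil (A : V →ₗ[ℂ] Module.End ℂ V) : V →L[ℂ] V →L[ℂ] V :=
  LinearMap.toContinuousLinearMap ((LinearMap.toContinuousLinearMap : (V →ₗ[ℂ] V) ≃ₗ[ℂ] (V →L[ℂ] V)).toLinearMap ∘ₗ A)

lemma cbil_apply (A : V →ₗ[ℂ] Module.End ℂ V) (x y : V) : cbil A x y = A x y := rfl

def chi (A : V →ₗ[ℂ] Module.End ℂ V) (h : V) (p : V →ₗ[ℂ] V) (l : List (V →ₗ[ℂ] V)) (v : V) : V :=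
  l.foldr (fun e y => endExp (A (e v)) y) (h + p v)

lemma analytic_bil (A : V →ₗ[ℂ] Module.End ℂ V) (e : V →ₗ[ℂ] V) {G : V → V} {v : V}
    (hG : AnalyticAt ℂ G v) : AnalyticAt ℂ (fun v => A (e v) (G v)) v := by
  have he : AnalyticAt ℂ (fun v => e v) v := (LinearMap.toContinuousLinearMap e).analyticAt v
  exact (cbil A).analyticAt_bilinear (e v, G v) |>.comp₂ he hG

lemma analytic_pow (A : V →ₗ[ℂ] Module.End ℂ V) (e : V →ₗ[ℂ] V) {G : V → V} {v : V}
    (hG : AnalyticAt ℂ G v) (k : ℕ) : AnalyticAt ℂ (fun v => (A (e v) ^ k) (G v)) v := by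
  induction k with
  | zero => simpa using hG
  | succ k ih =>
    have := analytic_bil A e ih
    refine this.congr ?_
    filter_upwards with w
    rw [pow_succ', Module.End.mul_apply]

lemma endExp_split (B : Module.End ℂ V) (y : V) : endExp B y =
    y + B (∑ k ∈ Finset.range (Module.finrank ℂ V), (((k+1).factorial : ℂ)⁻¹) • (B ^ k) y) := by
  rw [endExp, Finset.sum_range_succ']
  simp only [LinearMap.add_apply, LinearMap.sum_apply, LinearMap.smul_apply, map_sum, map_smul]
  rw [add_comm]
  congr 1
  · simp
  · refine Finset.sum_congr rfl fun k _ => ?_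
    rw [pow_succ', Module.End.mul_apply]

lemma analytic_K (A : V →ₗ[ℂ] Module.End ℂ V) (e : V →ₗ[ℂ] V) {G : V → V} {v : V}
    (hG : AnalyticAt ℂ G v) : AnalyticAt ℂ (fun v =>
      ∑ k ∈ Finset.range (Module.finrank ℂ V), (((k+1).factorial : ℂ)⁻¹) • (A (e v) ^ k) (G v)) v := by
  refine Finset.analyticAt_fun_sum _ fun k _ => ?_
  exact analyticAt_const.smul (analytic_pow A e hG k)

lemma step_analytic (A : V →ₗ[ℂ] Module.End ℂ V) (e : V →ₗ[ℂ] V) {G : V → V} {v : V}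
    (hG : AnalyticAt ℂ G v) : AnalyticAt ℂ (fun v => endExp (A (e v)) (G v)) v := by
  simp only [endExp_split]
  exact hG.add (analytic_bil A e (analytic_K A e hG))

lemma step_deriv (A : V →ₗ[ℂ] Module.End ℂ V) (e : V →ₗ[ℂ] V) {G : V → V}
    (hG : AnalyticAt ℂ G 0) {G' : V →L[ℂ] V} (hG' : HasFDerivAt G G' 0) :
    HasFDerivAt (fun v => endExp (A (e v)) (G v))
      (G' + ((cbil A).flip (G 0)).comp (LinearMap.toContinuousLinearMap e)) 0 := by
  simp only [endExp_split]
  refine hG'.add ?_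
  set K : V → V := fun v =>
      ∑ k ∈ Finset.range (Module.finrank ℂ V), (((k+1).factorial : ℂ)⁻¹) • (A (e v) ^ k) (G v) with hK
  have hKa : AnalyticAt ℂ K 0 := analytic_K A e hG
  have hK0 : K 0 = G 0 := by
    rcases Nat.eq_zero_or_pos (Module.finrank ℂ V) with h | h
    · have := Module.finrank_zero_iff.mp h
      exact Subsingleton.elim _ _
    · obtain ⟨m, hm⟩ := Nat.exists_eq_succ_of_ne_zero h.ne'
      simp only [hK, hm, Finset.sum_range_succ']
      simp
  have he : HasFDerivAt (fun v => e v) (LinearMap.toContinuousLinearMap e) 0 :=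
    (LinearMap.toContinuousLinearMap e).hasFDerivAt
  have := (cbil A).hasFDerivAt_of_bilinear he hKa.differentiableAt.hasFDerivAt
  refine this.congr_fderiv ?_
  ext v
  simp [hK0, cbil_apply]

lemma chi_analytic (A : V →ₗ[ℂ] Module.End ℂ V) (h : V) (p : V →ₗ[ℂ] V) (l : List (V →ₗ[ℂ] V)) (v : V) :
    AnalyticAt ℂ (chi A h p l) v := by
  induction l with
  | nil => exact analyticAt_const.add ((LinearMap.toContinuousLinearMap p).analyticAt v)
  | cons e l ih => exact step_analytic A e ih

lemma chi_zero (A : V →ₗ[ℂ] Module.End ℂ V) (h : V) (p : V →ₗ[ℂ] V) (l : List (V →ₗ[ℂ] V)) :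
    chi A h p l 0 = h := by
  induction l with
  | nil => simp [chi]
  | cons e l ih =>
    show endExp (A (e 0)) (chi A h p l 0) = h
    rw [ih, endExp_split]; simp

lemma chi_deriv (A : V →ₗ[ℂ] Module.End ℂ V) (h : V) (p : V →ₗ[ℂ] V) (l : List (V →ₗ[ℂ] V)) :
    ∃ L : V →L[ℂ] V, HasFDerivAt (chi A h p l) L 0 ∧
      ∀ v, L v = p v + (l.map fun e => A (e v) h).sum := by
  induction l with
  | nil =>
    refine ⟨LinearMap.toContinuousLinearMap p, ?_, by simp⟩
    exact ((LinearMap.toContinuousLinearMap p).hasFDerivAt).const_add h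
  | cons e l ih =>
    obtain ⟨L, hL, hLv⟩ := ih
    refine ⟨_, step_deriv A e (chi_analytic A h p l 0) hL, fun v => ?_⟩
    simp [hLv, chi_zero, cbil_apply]
    abel

lemma chi_inverse (A : V →ₗ[ℂ] Module.End ℂ V) (h : V) (p : V →ₗ[ℂ] V) (l : List (V →ₗ[ℂ] V))
    (hid : ∀ v, p v + (l.map fun e => A (e v) h).sum = v) :
    ∃ σ : V → V, AnalyticAt ℂ σ h ∧ σ h = 0 ∧ ∀ᶠ y in 𝓝 h, chi A h p l (σ y) = y := by
  obtain ⟨L, hL, hLv⟩ := chi_deriv A h p l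
  have hLid : L = ((ContinuousLinearEquiv.refl ℂ V : V ≃L[ℂ] V) : V →L[ℂ] V) := by
    ext v; rw [hLv, hid]; rfl
  rw [hLid] at hL
  have hc : ContDiffAt ℂ ω (chi A h p l) 0 := (chi_analytic A h p l 0).contDiffAt
  have hn : (ω : WithTop ℕ∞) ≠ 0 := by simp
  refine ⟨hc.localInverse hL hn, ?_, ?_, ?_⟩
  · have := (hc.to_localInverse hL hn).analyticAt
    rwa [chi_zero] at this
  · have := hc.localInverse_apply_image hL hn
    rwa [chi_zero] at this
  · have := (hc.toOpenPartialHomeomorph _ hL hn).eventually_right_inverse'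
      (hc.mem_toOpenPartialHomeomorph_source hL hn)
    rw [hc.toOpenPartialHomeomorph_coe hL hn, chi_zero] at this
    exact this
end chart

set_option linter.unusedSectionVars false
section alg
variable {g : Type*} [LieRing g] [LieAlgebra ℂ g] [FiniteDimensional ℂ g]
open LieAlgebra

lemma endExp_isNilpotent_exp [Module ℚ g] (A : Module.End ℂ g) (hA : IsNilpotent A) :
    endExp A = IsNilpotent.exp A := by
  have h1 : A ^ (Module.finrank ℂ g + 1) = 0 := by
    obtain ⟨n, hn⟩ := hA
    have := Module.End.ker_pow_le_ker_pow_finrank A n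
    rw [hn, LinearMap.ker_zero, top_le_iff, LinearMap.ker_eq_top] at this
    rw [pow_succ, this, zero_mul]
  rw [IsNilpotent.exp_eq_sum h1]
  unfold endExp
  refine Finset.sum_congr rfl fun k _ => ?_
  ext v
  simp only [LinearMap.smul_apply]
  have : ((k.factorial : ℚ)⁻¹ • (A ^ k) v) = (((k.factorial : ℚ)⁻¹ : ℚ) : ℂ) • (A ^ k) v :=
    (Rat.cast_smul_eq_qsmul ℂ _ _).symm
  rw [this]; push_cast; rfl

lemma exists_adj_of_nilp (x : g) (hx : IsNilpotent (ad ℂ g x)) :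
    ∃ u : g ≃ₗ[ℂ] g, u ∈ adjointGroup g ∧ ∀ y, u y = endExp (ad ℂ g x) y := by
  letI : Module ℚ g := Module.compHom g (algebraMap ℚ ℂ)
  have h1 : endExp (ad ℂ g x) * IsNilpotent.exp (- ad ℂ g x) = 1 := by
    rw [endExp_isNilpotent_exp _ hx, hx.exp_mul_exp_neg_self]
  have h2 : IsNilpotent.exp (- ad ℂ g x) * endExp (ad ℂ g x) = 1 := by
    rw [endExp_isNilpotent_exp _ hx, hx.exp_neg_mul_exp_self]
  let u : g ≃ₗ[ℂ] g := LinearEquiv.ofLinearMap (endExp (ad ℂ g x)) (IsNilpotent.exp (- ad ℂ g x)) h1 h2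
  refine ⟨u, Subgroup.subset_closure ⟨x, hx, ?_⟩, fun y => rfl⟩
  ext y; rfl

lemma endExp_lie (x : g) (hx : IsNilpotent (ad ℂ g x)) (a b : g) :
    endExp (ad ℂ g x) ⁅a, b⁆ = ⁅endExp (ad ℂ g x) a, endExp (ad ℂ g x) b⁆ := by
  letI : Module ℚ g := Module.compHom g (algebraMap ℚ ℂ)
  rw [endExp_isNilpotent_exp _ hx]
  let _i := LieRing.toNonUnitalNonAssocRing g
  have : SMulCommClass ℂ g g := LieAlgebra.smulCommClass ℂ g
  have : IsScalarTower ℂ g g := LieAlgebra.isScalarTower ℂ g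
  refine Module.End.exp_mul_of_derivation ℂ g (ad ℂ g x) ?_ hx a b
  intro c d
  show ⁅x, ⁅c, d⁆⁆ = ⁅c, ⁅x, d⁆⁆ + ⁅⁅x, c⁆, d⁆
  rw [leibniz_lie, add_comm]

lemma adj_lie {u : g ≃ₗ[ℂ] g} (hu : u ∈ adjointGroup g) : ∀ a b : g, u ⁅a, b⁆ = ⁅u a, u b⁆ := by
  induction hu using Subgroup.closure_induction with
  | mem u hu =>
    obtain ⟨x, hx, h⟩ := hu
    intro a b
    have : ∀ c, u c = endExp (ad ℂ g x) c := fun c => by rw [← h]; rfl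
    rw [this, this, this, endExp_lie x hx]
  | one => intro a b; rfl
  | mul u v _ _ h1 h2 =>
    intro a b
    show u (v _) = ⁅u (v a), u (v b)⁆
    rw [h2, h1]
  | inv u _ h =>
    intro a b
    apply u.injective
    have e : ∀ c, u (u⁻¹ c) = c := u.apply_symm_apply
    rw [h, e, e, e]

lemma inv_app (u : g ≃ₗ[ℂ] g) (c : g) : u⁻¹ (u c) = c := u.symm_apply_apply c
lemma app_inv (u : g ≃ₗ[ℂ] g) (c : g) : u (u⁻¹ c) = c := u.apply_symm_apply c
lemma mul_app (u v : g ≃ₗ[ℂ] g) (c : g) : (u * v) c = u (v c) := rfl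

lemma adj_ad {u : g ≃ₗ[ℂ] g} (hu : u ∈ adjointGroup g) (x : g) :
    ad ℂ g (u x) = u.conj (ad ℂ g x) := by
  ext y
  rw [LinearEquiv.conj_apply_apply]
  simp only [ad_apply]
  rw [adj_lie hu, u.apply_symm_apply]

lemma adj_charpoly {u : g ≃ₗ[ℂ] g} (hu : u ∈ adjointGroup g) (x : g) :
    (ad ℂ g (u x)).charpoly = (ad ℂ g x).charpoly := by
  rw [adj_ad hu, LinearEquiv.charpoly_conj]

lemma adj_pow {u : g ≃ₗ[ℂ] g} (hu : u ∈ adjointGroup g) (x y : g) (n : ℕ) :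
    (ad ℂ g (u x) ^ n) (u y) = u ((ad ℂ g x ^ n) y) := by
  induction n with
  | zero => rfl
  | succ n ih => rw [pow_succ', pow_succ', Module.End.mul_apply, ih, Module.End.mul_apply,
      ad_apply, ad_apply, adj_lie hu]

lemma adj_engel {u : g ≃ₗ[ℂ] g} (hu : u ∈ adjointGroup g) (x y : g) :
    u y ∈ LieSubalgebra.engel ℂ (u x) ↔ y ∈ LieSubalgebra.engel ℂ x := by
  simp only [LieSubalgebra.mem_engel_iff, adj_pow hu]
  simp

lemma adj_isRegular {u : g ≃ₗ[ℂ] g} (hu : u ∈ adjointGroup g) (x : g) :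
    IsRegular ℂ (u x) ↔ IsRegular ℂ x := by
  rw [isRegular_def, isRegular_def, adj_charpoly hu]

lemma engel_cartan {x : g} (hx : IsRegular ℂ x) :
    (LieSubalgebra.engel ℂ x).IsCartanSubalgebra := by
  refine ⟨?_, LieSubalgebra.normalizer_engel _ _⟩
  apply LieSubalgebra.isNilpotent_of_forall_le_engel
  intro y hy
  set Ex : {LieSubalgebra.engel ℂ z | z ∈ LieSubalgebra.engel ℂ x} :=
    ⟨LieSubalgebra.engel ℂ x, x, LieSubalgebra.self_mem_engel _ _, rfl⟩
  suffices IsBot Ex from @this ⟨LieSubalgebra.engel ℂ y, y, hy, rfl⟩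
  have h : (Module.finrank ℂ g : Cardinal) ≤ Cardinal.mk ℂ :=
    Cardinal.natCast_le_aleph0.trans <| Cardinal.infinite_iff.mp inferInstance
  apply engel_isBot_of_isMin h (LieSubalgebra.engel ℂ x) Ex le_rfl
  rintro ⟨_, y, hy, rfl⟩ hyx
  suffices Module.finrank ℂ (LieSubalgebra.engel ℂ x) ≤ Module.finrank ℂ (LieSubalgebra.engel ℂ y) by
    suffices LieSubalgebra.engel ℂ y = LieSubalgebra.engel ℂ x from this.ge
    apply LieSubalgebra.toSubmodule_injective
    exact Submodule.eq_of_le_of_finrank_le hyx this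
  rw [(isRegular_iff_finrank_engel_eq_rank ℂ x).mp hx]
  apply rank_le_finrank_engel

end alg

set_option linter.unusedSectionVars false
section roots
universe u
variable {g : Type u} [LieRing g] [LieAlgebra ℂ g] [FiniteDimensional ℂ g] [LieAlgebra.IsKilling ℂ g]
variable (t : LieSubalgebra ℂ g) [t.IsCartanSubalgebra]
open LieAlgebra LieModule

/-- Root data of a Cartan subalgebra, with a decomposition map. -/
structure RD where
  ι : Type u
  fin : Fintype ι
  α : ι → (t →ₗ[ℂ] ℂ)
  s : ι → (g →ₗ[ℂ] g)
  sum : ∀ v, ∑ i, s i v = v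
  eig : ∀ i (h : t) v, ⁅(h : g), s i v⁆ = α i h • s i v
  zero : ∀ i, α i = 0 → ∀ v, s i v ∈ t
  nil : ∀ i, α i ≠ 0 → ∀ v, IsNilpotent (ad ℂ g (s i v))
  inj : Function.Injective α
  ev : ∀ i, ∃ v : g, v ≠ 0 ∧ ∀ h : t, ⁅(h : g), v⁆ = α i h • v
  all : ∀ (a : t →ₗ[ℂ] ℂ) (v : g), v ≠ 0 → (∀ h : t, ⁅(h : g), v⁆ = a h • v) → ∃ i, α i = a
  sep : ∀ h : t, (∀ i, α i h = 0) → h = 0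
  span : Submodule.span ℂ (Set.range α) = ⊤
  indep : ∀ (c : ι → ℂ) (y : g), ∑ i, c i • s i y = 0 → ∀ i, c i • s i y = 0

attribute [instance] RD.fin

lemma exists_RD : Nonempty (RD t) := by
  classical
  let ι := Weight ℂ t g
  have hfin : Fintype ι := Fintype.ofFinite ι
  let S : (∀ i : ι, rootSpace t i) →ₗ[ℂ] g :=
    ∑ i : ι, (rootSpace t i).toSubmodule.subtype ∘ₗ LinearMap.proj i
  have hS : S.range = ⊤ := by
    rw [eq_top_iff]
    rintro v -
    have := iSup_genWeightSpace_eq_top' ℂ t g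
    have h2 : v ∈ (⨆ χ : ι, (genWeightSpace g χ).toSubmodule) := by
      rw [← LieSubmodule.iSup_toSubmodule, this]; trivial
    rw [Submodule.mem_iSup_iff_exists_finsupp] at h2
    obtain ⟨f, hf, hs⟩ := h2
    refine ⟨fun i => ⟨f i, hf i⟩, ?_⟩
    rw [← hs, Finsupp.sum_fintype _ _ (fun _ => rfl)]
    simp [S]
  obtain ⟨R, hR⟩ := LinearMap.exists_rightInverse_of_surjective S hS
  have key : ∀ v : g, ∀ a : t →ₗ[ℂ] ℂ, v ∈ rootSpace t a → ∀ h : t, ⁅(h : g), v⁆ = a h • v := by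
    intro v a hv h
    exact LieAlgebra.IsKilling.lie_eq_smul_of_mem_rootSpace hv h
  refine ⟨⟨ι, hfin, fun i => Weight.toLinear ℂ t g i,
    fun i => (rootSpace t i).toSubmodule.subtype ∘ₗ LinearMap.proj i ∘ₗ R,
    ?_, ?_, ?_, ?_, ?_, ?_, ?_, ?_, ?_, ?_⟩⟩
  · intro v
    have := LinearMap.congr_fun hR v
    simpa [S] using this
  · intro i h v
    exact key _ (Weight.toLinear ℂ t g i) (R v i).2 h
  · intro i hi v
    have h2 : (⇑i : t → ℂ) = 0 := by
      ext h; exact LinearMap.congr_fun hi h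
    have h1 : ∀ w : g, w ∈ rootSpace t i → w ∈ t := by
      intro w hw
      rw [h2, rootSpace_zero_eq] at hw
      simpa using hw
    exact h1 _ (R v i).2
  · intro i hi v
    have h2 : (⇑i : t → ℂ) ≠ 0 := by
      intro h; apply hi; ext x; exact congrFun h x
    exact isNilpotent_ad_of_mem_rootSpace t h2 (R v i).2
  · intro i j hij
    ext h
    exact LinearMap.congr_fun hij h
  · intro i
    obtain ⟨v, hv, hv0⟩ := i.exists_ne_zero
    exact ⟨v, hv0, key v (Weight.toLinear ℂ t g i) hv⟩
  · intro a v hv0 hv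
    have hm : v ∈ genWeightSpace g (a : t → ℂ) := by
      apply weightSpace_le_genWeightSpace
      rw [mem_weightSpace]
      exact hv
    refine ⟨⟨a, ?_⟩, ?_⟩
    · intro hb
      rw [hb] at hm
      exact hv0 (by simpa using hm)
    · ext h; rfl
  · intro h hh
    have h1 := LieAlgebra.IsKilling.iInf_ker_weight_eq_bot (K := ℂ) (L := g) (H := t)
    have h2 : h ∈ (⨅ α : Weight ℂ t g, α.ker) := by
      rw [Submodule.mem_iInf]; intro i; exact hh i
    rw [h1] at h2
    simpa using h2
  · exact LieAlgebra.IsKilling.span_weight_eq_top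
  · intro c y hy i
    have h1 := iSupIndep_genWeightSpace' ℂ t g
    have h2 : iSupIndep fun χ : Weight ℂ t g => (genWeightSpace g χ).toSubmodule :=
      LieSubmodule.iSupIndep_toSubmodule.mpr h1
    rw [iSupIndep_iff_finsetSum_eq_zero_imp_eq_zero] at h2
    exact h2 Finset.univ (fun i => c i • ((R y i : rootSpace t i) : g))
      (fun i _ => Submodule.smul_mem _ _ (R y i).2) hy i (Finset.mem_univ i)
variable {t}

lemma RD.pow (r : RD t) (h : t) (y : g) (n : ℕ) :
    (ad ℂ g (h : g) ^ n) y = ∑ i, (r.α i h) ^ n • r.s i y := by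
  induction n with
  | zero => simp [r.sum]
  | succ n ih =>
    rw [pow_succ', Module.End.mul_apply, ih, map_sum]
    refine Finset.sum_congr rfl fun i _ => ?_
    rw [map_smul, ad_apply, r.eig, smul_smul, pow_succ]

lemma le_engel (h : t) : t ≤ LieSubalgebra.engel ℂ (h : g) := by
  intro y hy
  rw [LieSubalgebra.mem_engel_iff]
  refine ⟨1, ?_⟩
  have := trivial_lie_zero t t h ⟨y, hy⟩
  simpa using congrArg Subtype.val this

lemma RD.engel_eq (r : RD t) (h : t) (hh : ∀ i, r.α i ≠ 0 → r.α i h ≠ 0) :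
    LieSubalgebra.engel ℂ (h : g) = t := by
  refine le_antisymm ?_ (le_engel h)
  intro y hy
  rw [LieSubalgebra.mem_engel_iff] at hy
  obtain ⟨n, hn⟩ := hy
  rw [r.pow] at hn
  have := r.indep _ _ hn
  rw [← r.sum y]
  refine sum_mem fun i _ => ?_
  by_cases hi : r.α i = 0
  · exact r.zero i hi y
  · have h1 := (smul_eq_zero.mp (this i)).resolve_left (pow_ne_zero _ (hh i hi))
    rw [h1]; exact zero_mem _

lemma RD.ne_zero (r : RD t) (h : t) (hh : LieSubalgebra.engel ℂ (h : g) = t) (i : r.ι)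
    (hi : r.α i ≠ 0) : r.α i h ≠ 0 := by
  intro h0
  obtain ⟨v, hv, hv2⟩ := r.ev i
  have hm : v ∈ LieSubalgebra.engel ℂ (h : g) := by
    rw [LieSubalgebra.mem_engel_iff]
    exact ⟨1, by simp [hv2, h0]⟩
  rw [hh] at hm
  apply hi
  ext k
  have h1 := hv2 k
  have := congrArg Subtype.val (trivial_lie_zero t t k ⟨v, hm⟩)
  have h2 : ⁅(k : g), v⁆ = 0 := by simpa using this
  rw [h2] at h1
  exact (smul_eq_zero.mp h1.symm).resolve_right hv

lemma RD.exists_generic (r : RD t) : ∃ x : t, LieSubalgebra.engel ℂ (x : g) = t ∧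
    Function.Injective (fun i => r.α i x) := by
  let F : {p : r.ι × r.ι // p.1 ≠ p.2} ⊕ {i : r.ι // r.α i ≠ 0} → Module.Dual ℂ t :=
    Sum.elim (fun p => r.α p.1.1 - r.α p.1.2) (fun i => r.α i.1)
  obtain ⟨x, hx⟩ := Module.Dual.exists_forall_ne_zero_of_forall_exists F (by
    intro i
    by_contra! hc
    have h0 : F i = 0 := by ext x; exact hc x
    rcases i with i | i
    · exact i.2 (r.inj (sub_eq_zero.mp h0))
    · exact i.2 h0)
  refine ⟨x, r.engel_eq x fun i hi => hx (Sum.inr ⟨i, hi⟩), ?_⟩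
  intro i j hij
  by_contra hne
  apply hx (Sum.inl ⟨(i, j), hne⟩)
  simpa [F, sub_eq_zero] using hij

end roots

set_option linter.unusedSectionVars false
open Topology Filter
/-- Auxiliary class: a normed Lie ring structure. -/
class NLie (g : Type*) extends NormedAddCommGroup g, LieRing g
/-- Auxiliary class: a normed complex Lie algebra structure (no compatibility required). -/
class NLieAlg (g : Type*) [NLie g] extends NormedSpace ℂ g, LieAlgebra ℂ g

section nrm
universe u
variable {g : Type u} [NLie g] [NLieAlg g] [FiniteDimensional ℂ g] [LieAlgebra.IsKilling ℂ g]
variable {t : LieSubalgebra ℂ g} [t.IsCartanSubalgebra]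
open LieAlgebra LieModule

lemma chi_adj (h : g) (p : g →ₗ[ℂ] g) (l : List (g →ₗ[ℂ] g)) (v : g)
    (hl : ∀ e ∈ l, IsNilpotent (ad ℂ g (e v))) :
    ∃ u ∈ adjointGroup g, u (h + p v) = chi (ad ℂ g : g →ₗ[ℂ] Module.End ℂ g) h p l v := by
  induction l with
  | nil => exact ⟨1, one_mem _, rfl⟩
  | cons e l ih =>
    obtain ⟨u, hu, h1⟩ := ih fun e' he' => hl e' (List.mem_cons_of_mem _ he')
    obtain ⟨w, hw, h2⟩ := exists_adj_of_nilp (e v) (hl e List.mem_cons_self)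
    refine ⟨w * u, mul_mem hw hu, ?_⟩
    show w (u (h + p v)) = _
    rw [h1, h2]
    rfl

lemma RD.chart (r : RD t) (h : t) (hh : LieSubalgebra.engel ℂ (h : g) = t) :
    ∃ π : g → g, AnalyticAt ℂ π h ∧ π h = h ∧ (∀ y, π y ∈ t) ∧
      ∀ᶠ y in 𝓝 (h : g), ∃ u ∈ adjointGroup g, u (π y) = y := by
  classical
  let p : g →ₗ[ℂ] g := ∑ i ∈ Finset.univ.filter (fun i => r.α i = 0), r.s i
  let l : List (g →ₗ[ℂ] g) := (Finset.univ.filter (fun i => ¬ r.α i = 0)).toList.map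
    (fun i => (-(r.α i h)⁻¹) • r.s i)
  have hid : ∀ v, p v + (l.map fun e => (ad ℂ g : g →ₗ[ℂ] Module.End ℂ g) (e v) (h : g)).sum = v := by
    intro v
    have h1 : (l.map fun e => (ad ℂ g : g →ₗ[ℂ] Module.End ℂ g) (e v) (h : g)).sum =
        ∑ i ∈ Finset.univ.filter (fun i => ¬ r.α i = 0), r.s i v := by
      simp only [l, List.map_map]
      rw [Finset.sum_map_toList]
      refine Finset.sum_congr rfl fun i hi => ?_
      have hi' := r.ne_zero h hh i (Finset.mem_filter.mp hi).2
      show ⁅(-(r.α i h)⁻¹) • r.s i v, (h : g)⁆ = r.s i v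
      rw [smul_lie, ← lie_skew, r.eig, smul_neg, neg_smul, neg_neg, smul_smul,
        inv_mul_cancel₀ hi', one_smul]
    rw [h1]
    simp only [p, LinearMap.sum_apply]
    rw [Finset.sum_filter_add_sum_filter_not, r.sum]
  obtain ⟨σ, hσ, hσ0, hσy⟩ := chi_inverse _ (h : g) p l hid
  refine ⟨fun y => h + p (σ y), ?_, ?_, ?_, ?_⟩
  · have : AnalyticAt ℂ (fun y => (LinearMap.toContinuousLinearMap p) (σ y)) (h : g) :=
      ((LinearMap.toContinuousLinearMap p).analyticAt _).comp hσ
    exact analyticAt_const.add this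
  · simp [hσ0]
  · intro y
    refine add_mem h.2 ?_
    simp only [p, LinearMap.sum_apply]
    exact sum_mem fun i hi => r.zero i (Finset.mem_filter.mp hi).2 _
  · filter_upwards [hσy] with y hy
    have := chi_adj (h : g) p l (σ y) ?_
    · obtain ⟨u, hu, h1⟩ := this
      exact ⟨u, hu, h1.trans hy⟩
    · intro e he
      simp only [l, List.mem_map, Finset.mem_toList, Finset.mem_filter] at he
      obtain ⟨i, ⟨-, hi⟩, rfl⟩ := he
      have : ((-(r.α i h)⁻¹) • r.s i) (σ y) = r.s i ((-(r.α i h)⁻¹) • σ y) := by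
        simp
      rw [this]
      exact r.nil i hi _

end nrm

set_option linter.unusedSectionVars false
open Topology Filter
section nrm
universe u
variable {g : Type u} [NLie g] [NLieAlg g] [FiniteDimensional ℂ g]
open LieAlgebra LieModule

lemma isPolyFun_charpoly_coeff (n : ℕ) : IsPolyFun (fun y : g => (ad ℂ g y).charpoly.coeff n) := by
  classical
  let b := Module.finBasis ℂ g
  have := isPolyFun_mvPoly b
    ((LinearMap.polyCharpoly (ad ℂ g : g →ₗ[ℂ] Module.End ℂ g) b).coeff n)
  convert this using 2 with y
  exact (LinearMap.polyCharpoly_coeff_eval (ad ℂ g : g →ₗ[ℂ] Module.End ℂ g) b y n).symm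

lemma isReg_iff (y : g) : IsRegular ℂ y ↔ (ad ℂ g y).charpoly.coeff (LieAlgebra.rank ℂ g) ≠ 0 :=
  isRegular_def ℂ y

lemma isReg_open : IsOpen {y : g | IsRegular ℂ y} := by
  have : {y : g | IsRegular ℂ y} =
    {y | (ad ℂ g y).charpoly.coeff (LieAlgebra.rank ℂ g) ≠ 0} := by
    ext y; exact isReg_iff y
  rw [this]
  exact isOpen_ne_fun (isPolyFun_charpoly_coeff _).continuous' continuous_const

lemma isReg_dense : Dense {y : g | IsRegular ℂ y} := by
  obtain ⟨x₀, h0⟩ := LieAlgebra.exists_isRegular ℂ g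
  exact reg_dense (isPolyFun_charpoly_coeff (LieAlgebra.rank ℂ g)) x₀ ((isReg_iff _).1 h0)

lemma isReg_preconnected : IsPreconnected {y : g | IsRegular ℂ y} :=
  reg_preconnected (isPolyFun_charpoly_coeff (LieAlgebra.rank ℂ g))

lemma engel_congr {u : g ≃ₗ[ℂ] g} (hu : u ∈ adjointGroup g) {x z : g}
    (h : LieSubalgebra.engel ℂ x = LieSubalgebra.engel ℂ z) :
    LieSubalgebra.engel ℂ (u x) = LieSubalgebra.engel ℂ (u z) := by
  ext a
  rw [← app_inv u a, adj_engel hu, adj_engel hu, h]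

variable [LieAlgebra.IsKilling ℂ g]
variable (t : LieSubalgebra ℂ g) [t.IsCartanSubalgebra]

lemma finrank_cartan : Module.finrank ℂ t = LieAlgebra.rank ℂ g := by
  obtain ⟨r⟩ := exists_RD t
  obtain ⟨x, hx, -⟩ := r.exists_generic
  obtain ⟨π, -, -, hπt, hπ⟩ := r.chart x hx
  obtain ⟨y, hy, ⟨u, hu, huy⟩⟩ := isReg_dense.inter_nhds_nonempty hπ
  have h1 : IsRegular ℂ (π y) := by
    rw [← adj_isRegular hu, huy]; exact hy
  have h2 := le_engel (t := t) ⟨π y, hπt y⟩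
  have h3 : Module.finrank ℂ t ≤ Module.finrank ℂ (LieSubalgebra.engel ℂ (π y)) :=
    Submodule.finrank_mono (s := t.toSubmodule) (t := (LieSubalgebra.engel ℂ (π y)).toSubmodule) h2
  rw [(isRegular_iff_finrank_engel_eq_rank ℂ _).1 h1] at h3
  have h4 := rank_le_finrank_engel ℂ (x : g)
  rw [hx] at h4
  exact le_antisymm h3 h4

variable {t}
lemma engel_eq_iff (h : t) : LieSubalgebra.engel ℂ (h : g) = t ↔ IsRegular ℂ (h : g) := by
  rw [isRegular_iff_finrank_engel_eq_rank, ← finrank_cartan t]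
  constructor
  · intro hh; rw [hh]
  · intro hh
    apply LieSubalgebra.toSubmodule_injective
    exact (Submodule.eq_of_le_of_finrank_le (le_engel h) hh.le).symm

lemma reg_of_engel {y : g} (h : LieSubalgebra.engel ℂ y = t) : y ∈ t ∧ IsRegular ℂ y := by
  have hy : y ∈ t := by rw [← h]; exact LieSubalgebra.self_mem_engel ℂ y
  exact ⟨hy, (engel_eq_iff ⟨y, hy⟩).1 h⟩

variable (t) in
lemma conj_open : IsOpen {y : g | ∃ u ∈ adjointGroup g, LieSubalgebra.engel ℂ (u y) = t} := by
  rw [isOpen_iff_mem_nhds]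
  rintro y ⟨u, hu, huy⟩
  obtain ⟨hm, hr⟩ := reg_of_engel huy
  obtain ⟨r⟩ := exists_RD t
  obtain ⟨π, -, -, hπt, hπ⟩ := r.chart ⟨u y, hm⟩ huy
  have hc : Tendsto (fun z => u z) (𝓝 y) (𝓝 (u y)) :=
    (LinearMap.continuous_of_finiteDimensional (u : g →ₗ[ℂ] g)).tendsto y
  have hev : ∀ᶠ z in 𝓝 (u y), IsRegular ℂ z := isReg_open.mem_nhds hr
  filter_upwards [hc.eventually hπ, hc.eventually hev] with z ⟨w, hw, hwz⟩ hz
  have h1 : IsRegular ℂ (π (u z)) := by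
    rw [← adj_isRegular hw, hwz]; exact hz
  refine ⟨w⁻¹ * u, mul_mem (inv_mem hw) hu, ?_⟩
  rw [mul_app, ← hwz, inv_app]
  exact (engel_eq_iff ⟨π (u z), hπt _⟩).2 h1

variable (t) in
lemma conj_exists {y : g} (hy : IsRegular ℂ y) :
    ∃ u ∈ adjointGroup g, LieSubalgebra.engel ℂ (u y) = t := by
  by_contra hne
  let O : LieSubalgebra ℂ g → Set g :=
    fun t => {y : g | ∃ u ∈ adjointGroup g, LieSubalgebra.engel ℂ (u y) = t}
  let U : Set g := ⋃ z ∈ {z : g | IsRegular ℂ z ∧ z ∉ O t}, O (LieSubalgebra.engel ℂ z)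
  have hU : IsOpen U := isOpen_biUnion fun z hz => by
    have := engel_cartan hz.1
    exact conj_open _
  have hself : ∀ z : g, z ∈ O (LieSubalgebra.engel ℂ z) := fun z => ⟨1, one_mem _, rfl⟩
  obtain ⟨r⟩ := exists_RD t
  obtain ⟨x, hx, -⟩ := r.exists_generic
  obtain ⟨z, hz, hz1, hz2⟩ := isReg_preconnected (g := g) (O t) U (conj_open t) hU
    (by
      intro z hz
      by_cases h : z ∈ O t
      · exact Or.inl h
      · exact Or.inr (Set.mem_biUnion (x := z) ⟨hz, h⟩ (hself z)))
    ⟨x, (engel_eq_iff x).1 hx, 1, one_mem _, hx⟩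
    ⟨y, hy, Set.mem_biUnion (x := y) ⟨hy, hne⟩ (hself y)⟩
  obtain ⟨w, ⟨hw1, hw2⟩, hw⟩ := Set.mem_iUnion₂.1 hz2
  apply hw2
  obtain ⟨u, hu, hut⟩ := hz1
  obtain ⟨v, hv, hvt⟩ := hw
  refine ⟨u * v⁻¹, mul_mem hu (inv_mem hv), ?_⟩
  rw [← hut, engel_congr (mul_mem hu (inv_mem hv)) hvt.symm, mul_app, inv_app]

end nrm

set_option linter.unusedSectionVars false
open Topology Filter
section nrm
universe u
variable {g : Type u} [NLie g] [NLieAlg g] [FiniteDimensional ℂ g]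
open LieAlgebra LieModule
variable [LieAlgebra.IsKilling ℂ g]
variable (t : LieSubalgebra ℂ g) [t.IsCartanSubalgebra]

/-- Linear self-maps of `t` induced by elements of the adjoint group. -/
def WG : Set (t →ₗ[ℂ] t) := {w | ∃ u ∈ adjointGroup g, ∀ h : t, u h = (w h : g)}

variable {t}
lemma WG_comp {a b : t →ₗ[ℂ] t} (ha : a ∈ WG t) (hb : b ∈ WG t) : a ∘ₗ b ∈ WG t := by
  obtain ⟨u, hu, h1⟩ := ha
  obtain ⟨v, hv, h2⟩ := hb
  refine ⟨u * v, mul_mem hu hv, fun h => ?_⟩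
  rw [mul_app, h2, h1]; rfl

lemma WG_inj {a : t →ₗ[ℂ] t} (ha : a ∈ WG t) : Function.Injective a := by
  obtain ⟨u, hu, h1⟩ := ha
  intro x y hxy
  apply Subtype.ext
  apply u.injective
  rw [h1, h1, hxy]

lemma WG_surj {a : t →ₗ[ℂ] t} (ha : a ∈ WG t) : Function.Surjective a :=
  LinearMap.surjective_of_injective (WG_inj ha)

variable (t) in
lemma WG_finite : (WG t).Finite := by
  obtain ⟨r⟩ := exists_RD t
  have h1 : (Set.pi Set.univ (fun _ : r.ι => Set.range r.α)).Finite :=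
    Set.Finite.pi fun _ => Set.finite_range _
  refine Set.Finite.of_injOn (f := fun w => fun i => r.α i ∘ₗ w) ?_ ?_ h1
  · rintro w ⟨u, hu, hw⟩ i -
    obtain ⟨v, hv, hv2⟩ := r.ev i
    refine r.all (r.α i ∘ₗ w) (u⁻¹ v) ?_ ?_
    · intro h
      apply hv
      rw [← app_inv u v, h, map_zero]
    · intro h
      apply u.injective
      rw [adj_lie hu, app_inv, hw, hv2, map_smul, app_inv]
      rfl
  · intro a _ b _ hab
    ext h
    have : a h - b h = 0 := by
      apply r.sep
      intro i
      have := LinearMap.congr_fun (congrFun hab i) h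
      rw [map_sub, sub_eq_zero]
      exact this
    rw [sub_eq_zero] at this
    rw [this]

variable (t) in
/-- The finite set underlying `WG`. -/
def WF : Finset (t →ₗ[ℂ] t) := (WG_finite t).toFinset

lemma mem_WF {w : t →ₗ[ℂ] t} : w ∈ WF t ↔ w ∈ WG t := Set.Finite.mem_toFinset _

lemma WF_prod (f : t → ℂ) {w : t →ₗ[ℂ] t} (hw : w ∈ WG t) (h : t) :
    ∏ a ∈ WF t, f (a (w h)) = ∏ a ∈ WF t, f (a h) := by
  classical
  have hinj : Function.Injective (fun a : t →ₗ[ℂ] t => a ∘ₗ w) := by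
    intro a b hab
    ext x
    obtain ⟨y, rfl⟩ := WG_surj hw x
    exact congrArg Subtype.val (LinearMap.congr_fun hab y)
  have himg : (WF t).image (fun a : t →ₗ[ℂ] t => a ∘ₗ w) = WF t := by
    apply Finset.eq_of_subset_of_card_le
    · intro b hb
      obtain ⟨a, ha, rfl⟩ := Finset.mem_image.1 hb
      exact mem_WF.2 (WG_comp (mem_WF.1 ha) hw)
    · rw [Finset.card_image_of_injective _ hinj]
  conv_rhs => rw [← himg]
  rw [Finset.prod_image (fun a _ b _ h => hinj h)]
  rfl

lemma exists_WG {v : g ≃ₗ[ℂ] g} (hv : v ∈ adjointGroup g) {x : g}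
    (h1 : LieSubalgebra.engel ℂ x = t) (h2 : LieSubalgebra.engel ℂ (v x) = t) :
    ∃ w ∈ WG t, ∀ h : t, v h = (w h : g) := by
  have hm : ∀ y ∈ t.toSubmodule, (v : g →ₗ[ℂ] g) y ∈ t.toSubmodule := by
    intro y hy
    show v y ∈ t
    rw [← h2, adj_engel hv, h1]
    exact hy
  exact ⟨(v : g →ₗ[ℂ] g).restrict hm, ⟨v, hv, fun h => rfl⟩, fun h => rfl⟩

lemma exists_lie_bound : ∃ K : ℝ, 0 ≤ K ∧ ∀ a b : g, ‖⁅a, b⁆‖ ≤ K * ‖a‖ * ‖b‖ := by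
  let B := cbil (ad ℂ g : g →ₗ[ℂ] Module.End ℂ g)
  refine ⟨‖B‖, ContinuousLinearMap.opNorm_nonneg B, fun a b => ?_⟩
  exact B.le_opNorm₂ a b

lemma weight_bound (m : t →ₗ[ℂ] ℂ) : ∃ C : ℝ, 0 ≤ C ∧ ∀ (y : g) (u : g ≃ₗ[ℂ] g),
    u ∈ adjointGroup g → ∀ h : t, u y = h → ‖m h‖ ≤ C * ‖y‖ := by
  obtain ⟨r⟩ := exists_RD t
  obtain ⟨K, hK, hb⟩ := exists_lie_bound (g := g)
  have hm : m ∈ Submodule.span ℂ (Set.range r.α) := by rw [r.span]; trivial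
  induction hm using Submodule.span_induction with
  | mem m hm =>
    obtain ⟨i, rfl⟩ := hm
    refine ⟨K, hK, fun y u hu h hy => ?_⟩
    obtain ⟨v, hv, hv2⟩ := r.ev i
    have h0 : u⁻¹ v ≠ 0 := by
      intro h
      apply hv
      rw [← app_inv u v, h, map_zero]
    have h1 : ⁅y, u⁻¹ v⁆ = r.α i h • (u⁻¹ v) := by
      apply u.injective
      rw [adj_lie hu, app_inv, hy, hv2, map_smul, app_inv]
    have h2 := hb y (u⁻¹ v)
    rw [h1, norm_smul] at h2
    exact le_of_mul_le_mul_right h2 (norm_pos_iff.2 h0)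
  | zero => exact ⟨0, le_rfl, by intros; simp⟩
  | add a b _ _ ha hb =>
    obtain ⟨C, hC, h1⟩ := ha
    obtain ⟨C', hC', h2⟩ := hb
    refine ⟨C + C', by positivity, fun y u hu h hy => ?_⟩
    refine (norm_add_le _ _).trans ?_
    rw [add_mul]
    exact add_le_add (h1 y u hu h hy) (h2 y u hu h hy)
  | smul c a _ ha =>
    obtain ⟨C, hC, h1⟩ := ha
    refine ⟨‖c‖ * C, by positivity, fun y u hu h hy => ?_⟩
    show ‖c * a h‖ ≤ _
    rw [norm_mul, mul_assoc]
    exact mul_le_mul_of_nonneg_left (h1 y u hu h hy) (norm_nonneg _)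

lemma exists_invariant (l : t →ₗ[ℂ] ℂ) (c : ℂ) : ∃ Q : g → ℂ, IsPolyFun Q ∧
    (∀ u ∈ adjointGroup g, ∀ v, Q (u v) = Q v) ∧
    ∀ h : t, IsRegular ℂ (h : g) → Q h = ∏ w ∈ WF t, (l (w h) - c) := by
  classical
  obtain ⟨pr, hpr⟩ := LinearMap.exists_leftInverse_of_injective t.toSubmodule.subtype
    (Submodule.ker_subtype _)
  have hpr' : ∀ h : t, pr (h : g) = h := fun h => LinearMap.congr_fun hpr h
  let P : g → ℂ := fun x => ∏ w ∈ WF t, (l (w (pr x)) - c)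
  have hP : IsPolyFun P := IsPolyFun.prod' fun w _ =>
    (isPolyFun_linear (l ∘ₗ w ∘ₗ pr)).sub' (isPolyFun_const c)
  have hP' : ∀ h : t, P h = ∏ w ∈ WF t, (l (w h) - c) := fun h => by simp only [P, hpr']
  have hwd : ∀ y : g, ∀ u ∈ adjointGroup g, ∀ v ∈ adjointGroup g,
      LieSubalgebra.engel ℂ (u y) = t → LieSubalgebra.engel ℂ (v y) = t → P (u y) = P (v y) := by
    intro y u hu v hv h1 h2
    have hm := (reg_of_engel h1).1
    obtain ⟨w, hw, hwv⟩ := exists_WG (v := v * u⁻¹) (mul_mem hv (inv_mem hu)) h1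
      (by rw [mul_app, inv_app]; exact h2)
    have h3 := hwv ⟨u y, hm⟩
    rw [mul_app] at h3
    simp only [inv_app] at h3
    rw [h3, hP', WF_prod (fun x => l x - c) hw, ← hP']
  let F : g → ℂ := fun y => if h : ∃ u ∈ adjointGroup g, LieSubalgebra.engel ℂ (u y) = t
    then P (h.choose y) else 0
  have hF : ∀ y : g, ∀ u ∈ adjointGroup g, LieSubalgebra.engel ℂ (u y) = t → F y = P (u y) := by
    intro y u hu h
    have hex : ∃ u ∈ adjointGroup g, LieSubalgebra.engel ℂ (u y) = t := ⟨u, hu, h⟩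
    simp only [F, dif_pos hex]
    exact hwd y _ hex.choose_spec.1 u hu hex.choose_spec.2 h
  obtain ⟨x₀, h0⟩ := LieAlgebra.exists_isRegular ℂ g
  have han : ∀ y : g, IsRegular ℂ y → AnalyticAt ℂ F y := by
    intro y hy
    obtain ⟨u, hu, huy⟩ := conj_exists t hy
    obtain ⟨hm, hr⟩ := reg_of_engel huy
    obtain ⟨r⟩ := exists_RD t
    obtain ⟨π, hπa, hπ0, hπt, hπ⟩ := r.chart ⟨u y, hm⟩ huy
    let uc : g →L[ℂ] g := LinearMap.toContinuousLinearMap (u : g →ₗ[ℂ] g)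
    have huc : ∀ z, uc z = u z := fun z => rfl
    have hev : ∀ᶠ z in 𝓝 (u y), IsRegular ℂ z := isReg_open.mem_nhds hr
    have hc : Tendsto (fun z => u z) (𝓝 y) (𝓝 (u y)) := uc.continuous.tendsto y
    have hG : AnalyticAt ℂ (fun z => P (π (uc z))) y := by
      have h1 : AnalyticAt ℂ π (uc y) := hπa
      have h2 : AnalyticAt ℂ (fun z => π (uc z)) y :=
        AnalyticAt.fun_comp (f := fun z => uc z) h1 (uc.analyticAt y)
      exact AnalyticAt.fun_comp (hP.analytic' _) h2
    refine hG.congr ?_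
    filter_upwards [hc.eventually hπ, hc.eventually hev] with z ⟨w, hw, hwz⟩ hz
    have h1 : IsRegular ℂ (π (u z)) := by
      rw [← adj_isRegular hw, hwz]; exact hz
    have h2 : (w⁻¹ * u) z = π (u z) := by rw [mul_app, ← hwz, inv_app, hwz]
    rw [hF z (w⁻¹ * u) (mul_mem (inv_mem hw) hu), h2, huc]
    rw [h2]
    exact (engel_eq_iff ⟨π (u z), hπt _⟩).2 h1
  choose C hC0 hC using fun w : t →ₗ[ℂ] t => weight_bound (l ∘ₗ w)
  have hbd : ∀ y : g, IsRegular ℂ y → ‖F y‖ ≤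
      (∏ w ∈ WF t, (C w + ‖c‖)) * (1 + ‖y‖) ^ (WF t).card := by
    intro y hy
    obtain ⟨u, hu, huy⟩ := conj_exists t hy
    obtain ⟨hm, hr⟩ := reg_of_engel huy
    rw [hF y u hu huy, hP' ⟨u y, hm⟩, norm_prod, ← Finset.prod_const, ← Finset.prod_mul_distrib]
    refine Finset.prod_le_prod (fun _ _ => norm_nonneg _) fun w _ => ?_
    refine (norm_sub_le _ _).trans ?_
    have h1 := hC w y u hu ⟨u y, hm⟩ rfl
    simp only [LinearMap.comp_apply] at h1
    have := norm_nonneg y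
    have := norm_nonneg c
    have := hC0 w
    nlinarith [mul_nonneg (norm_nonneg c) (norm_nonneg y)]
  obtain ⟨Q, hQ, hQF⟩ := aux_extend (isPolyFun_charpoly_coeff (g := g) (LieAlgebra.rank ℂ g)) x₀
    ((isReg_iff _).1 h0) (fun y hy => han y ((isReg_iff y).2 hy))
    (fun y hy => hbd y ((isReg_iff y).2 hy))
  refine ⟨Q, hQ, ?_, ?_⟩
  · intro u hu v
    have hcu : Continuous (fun z => u z) :=
      LinearMap.continuous_of_finiteDimensional (u : g →ₗ[ℂ] g)
    have := Continuous.ext_on isReg_dense (hQ.continuous'.comp hcu) hQ.continuous' (by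
      intro y hy
      have hy' : IsRegular ℂ (u y) := (adj_isRegular hu y).2 hy
      show Q (u y) = Q y
      rw [hQF y ((isReg_iff y).1 hy), hQF (u y) ((isReg_iff _).1 hy')]
      obtain ⟨v, hv, hvy⟩ := conj_exists t hy'
      rw [hF (u y) v hv hvy, hF y (v * u) (mul_mem hv hu) hvy, mul_app])
    exact congrFun this v
  · intro h hh
    rw [hQF _ ((isReg_iff _).1 hh), hF h 1 (one_mem _) ((engel_eq_iff h).2 hh)]
    exact hP' h
end nrm

set_option linter.unusedSectionVars false
open Topology Filter
section nrm
universe u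
variable {g : Type u} [NLie g] [NLieAlg g] [FiniteDimensional ℂ g]
open LieAlgebra LieModule

lemma isPolyFun_pow (n : ℕ) : ∀ L : Module.End ℂ g →ₗ[ℂ] ℂ,
    IsPolyFun (fun y : g => L (ad ℂ g y ^ n)) := by
  induction n with
  | zero => intro L; simpa using isPolyFun_const _
  | succ n ih =>
    intro L
    let b := Module.finBasis ℂ g
    have h : (fun y : g => L (ad ℂ g y ^ (n+1))) = fun y => ∑ i, b.coord i y *
        (L ∘ₗ LinearMap.mulRight ℂ (ad ℂ g (b i))) (ad ℂ g y ^ n) := by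
      ext y
      have hy : ad ℂ g y = ∑ i, b.coord i y • ad ℂ g (b i) := by
        conv_lhs => rw [← b.sum_repr y, map_sum]
        refine Finset.sum_congr rfl fun i _ => ?_
        rw [map_smul]; rfl
      have h2 : ad ℂ g y ^ (n+1) = ∑ i, ad ℂ g y ^ n * (b.coord i y • ad ℂ g (b i)) := by
        rw [pow_succ, ← Finset.mul_sum, ← hy]
      rw [h2, map_sum]
      refine Finset.sum_congr rfl fun i _ => ?_
      simp
    rw [h]
    exact IsPolyFun.sum' fun i _ => (isPolyFun_linear (b.coord i)).mul' (ih _)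

lemma hasDeriv_pow (A B : Module.End ℂ g) (n : ℕ) : ∀ L : Module.End ℂ g →ₗ[ℂ] ℂ,
    HasDerivAt (fun s : ℂ => L ((A + s • B) ^ n))
      (L (∑ i ∈ Finset.range n, A ^ i * B * A ^ (n - 1 - i))) 0 := by
  induction n with
  | zero => intro L; simpa using hasDerivAt_const _ _
  | succ n ih =>
    intro L
    have h1 := ih (L ∘ₗ LinearMap.mulRight ℂ A)
    have h2 := (hasDerivAt_id (0 : ℂ)).mul (ih (L ∘ₗ LinearMap.mulRight ℂ B))
    have h3 := h1.add h2
    have ef : (fun s : ℂ => L ((A + s • B) ^ (n+1))) =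
        (fun s => (L ∘ₗ LinearMap.mulRight ℂ A) ((A + s • B) ^ n)) +
          id * fun s => (L ∘ₗ LinearMap.mulRight ℂ B) ((A + s • B) ^ n) := by
      ext s
      simp [pow_succ, mul_add]
    have ev : L (∑ i ∈ Finset.range (n + 1), A ^ i * B * A ^ (n + 1 - 1 - i)) =
        (L ∘ₗ LinearMap.mulRight ℂ A) (∑ i ∈ Finset.range n, A ^ i * B * A ^ (n - 1 - i)) +
        (1 * (L ∘ₗ LinearMap.mulRight ℂ B) ((A + (0 : ℂ) • B) ^ n) + id (0 : ℂ) *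
          (L ∘ₗ LinearMap.mulRight ℂ B) (∑ i ∈ Finset.range n, A ^ i * B * A ^ (n - 1 - i))) := by
      rw [Finset.sum_range_succ, map_add]
      simp only [LinearMap.comp_apply, LinearMap.mulRight_apply, id, one_mul, zero_mul, add_zero,
        zero_smul, Finset.sum_mul]
      congr 2
      · refine Finset.sum_congr rfl fun i hi => ?_
        have := Finset.mem_range.1 hi
        rw [mul_assoc _ _ A, ← pow_succ]
        congr 2; omega
      · simp
    rw [ef, ev]
    exact h3

lemma trace_deriv (A B : Module.End ℂ g) (n : ℕ) :
    HasDerivAt (fun s : ℂ => LinearMap.trace ℂ g ((A + s • B) ^ (n + 1)))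
      ((n + 1) * LinearMap.trace ℂ g (A ^ n * B)) 0 := by
  convert hasDeriv_pow A B (n+1) (LinearMap.trace ℂ g) using 1
  rw [map_sum]
  rw [Finset.sum_congr rfl (g := fun _ => LinearMap.trace ℂ g (A ^ n * B))]
  · simp
  · intro i hi
    have := Finset.mem_range.1 hi
    rw [LinearMap.trace_mul_comm, ← mul_assoc, ← pow_add]
    congr 3; omega

lemma adj_trace {u : g ≃ₗ[ℂ] g} (hu : u ∈ adjointGroup g) (x : g) (n : ℕ) :
    LinearMap.trace ℂ g (ad ℂ g (u x) ^ n) = LinearMap.trace ℂ g (ad ℂ g x ^ n) := by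
  have : ad ℂ g (u x) ^ n = u.conj (ad ℂ g x ^ n) := by
    ext y
    rw [LinearEquiv.conj_apply_apply, ← adj_pow hu, u.apply_symm_apply]
  rw [this, LinearMap.trace_conj']

lemma prime_tau {φ : g ≃ₗ[ℂ] g} (hφ : φ ∈ primeGroup (adjointGroup g)) (y v : g) (n : ℕ) :
    LinearMap.trace ℂ g (ad ℂ g (φ y) ^ n * ad ℂ g (φ v)) =
      LinearMap.trace ℂ g (ad ℂ g y ^ n * ad ℂ g v) := by
  have hf := hφ (fun y => LinearMap.trace ℂ g (ad ℂ g y ^ (n+1))) (isPolyFun_pow _ _)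
    (fun u hu v => adj_trace hu v _)
  have h1 := trace_deriv (ad ℂ g (φ y)) (ad ℂ g (φ v)) n
  have h2 := trace_deriv (ad ℂ g y) (ad ℂ g v) n
  have h3 : (fun s : ℂ => LinearMap.trace ℂ g ((ad ℂ g (φ y) + s • ad ℂ g (φ v)) ^ (n + 1))) =
    (fun s : ℂ => LinearMap.trace ℂ g ((ad ℂ g y + s • ad ℂ g v) ^ (n + 1))) := by
    ext s
    have := hf (y + s • v)
    simpa using this
  rw [h3] at h1
  have h4 := h1.unique h2
  have h5 : (n + 1 : ℂ) ≠ 0 := by exact_mod_cast Nat.succ_ne_zero n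
  exact mul_left_cancel₀ h5 h4

lemma prime_tau_poly {φ : g ≃ₗ[ℂ] g} (hφ : φ ∈ primeGroup (adjointGroup g)) (y v : g)
    (q : Polynomial ℂ) :
    LinearMap.trace ℂ g (Polynomial.aeval (ad ℂ g (φ y)) q * ad ℂ g (φ v)) =
      LinearMap.trace ℂ g (Polynomial.aeval (ad ℂ g y) q * ad ℂ g v) := by
  simp only [Polynomial.aeval_eq_sum_range, Finset.sum_mul, map_sum, smul_mul_assoc, map_smul,
    prime_tau hφ]

variable [LieAlgebra.IsKilling ℂ g]

/-- `c` represents the functional `v ↦ tr (q (ad y) ad v)`. -/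
def IsC (q : Polynomial ℂ) (y c : g) : Prop := ∀ v : g,
  LinearMap.trace ℂ g (ad ℂ g c * ad ℂ g v) =
    LinearMap.trace ℂ g (Polynomial.aeval (ad ℂ g y) q * ad ℂ g v)

lemma IsC.map {φ : g ≃ₗ[ℂ] g} (hφ : φ ∈ primeGroup (adjointGroup g)) {q : Polynomial ℂ} {y c : g}
    (h : IsC q y c) : IsC q (φ y) (φ c) := by
  intro v
  obtain ⟨v, rfl⟩ := φ.surjective v
  rw [prime_tau_poly hφ, ← h v]
  simpa using prime_tau hφ c v 1

lemma ad_lie_eq_s1 (a b : g) : ad ℂ g ⁅a, b⁆ = ad ℂ g a * ad ℂ g b - ad ℂ g b * ad ℂ g a := by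
  ext y
  show ⁅⁅a, b⁆, y⁆ = ⁅a, ⁅b, y⁆⁆ - ⁅b, ⁅a, y⁆⁆
  rw [lie_lie]

lemma IsC.comm {q : Polynomial ℂ} {y c : g} (h : IsC q y c) : ⁅y, c⁆ = 0 := by
  have hn := LieAlgebra.IsKilling.killingForm_nondegenerate ℂ g
  refine hn.1 _ fun v => ?_
  have h1 := h ⁅v, y⁆
  show LinearMap.trace ℂ g (ad ℂ g ⁅y, c⁆ * ad ℂ g v) = 0
  have e1 : LinearMap.trace ℂ g (ad ℂ g ⁅y, c⁆ * ad ℂ g v) =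
      LinearMap.trace ℂ g (ad ℂ g c * ad ℂ g ⁅v, y⁆) := by
    rw [ad_lie_eq_s1, ad_lie_eq_s1, sub_mul, mul_sub, map_sub,
      map_sub, mul_assoc, LinearMap.trace_mul_comm, mul_assoc, mul_assoc]
  rw [e1, h1, ad_lie_eq_s1, mul_sub, map_sub, sub_eq_zero]
  have hc : Commute (ad ℂ g y) (Polynomial.aeval (ad ℂ g y) q) := by
    have := congrArg (Polynomial.aeval (ad ℂ g y)) (mul_comm Polynomial.X q)
    rwa [map_mul, map_mul, Polynomial.aeval_X] at this
  rw [← mul_assoc, LinearMap.trace_mul_comm, ← mul_assoc, ← mul_assoc, hc.eq]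

variable {t : LieSubalgebra ℂ g} [t.IsCartanSubalgebra]

lemma RD.exists_IsC (r : RD t) (x : t) (hx : Function.Injective (fun i => r.α i x)) (h : t) :
    ∃ q, IsC q (x : g) (h : g) := by
  classical
  let q := Lagrange.interpolate Finset.univ (fun i => r.α i x) (fun i => r.α i h)
  have hq : ∀ i, q.eval (r.α i x) = r.α i h := fun i =>
    Lagrange.eval_interpolate_at_node _ hx.injOn (Finset.mem_univ i)
  refine ⟨q, fun v => ?_⟩
  have : ad ℂ g (h : g) = Polynomial.aeval (ad ℂ g (x : g)) q := by
    ext y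
    have e1 := r.pow h y 1
    rw [pow_one] at e1
    rw [e1, Polynomial.aeval_eq_sum_range]
    simp only [LinearMap.sum_apply, LinearMap.smul_apply, r.pow, Finset.smul_sum, smul_smul, pow_one]
    rw [Finset.sum_comm]
    refine Finset.sum_congr rfl fun i _ => ?_
    rw [← hq i, Polynomial.eval_eq_sum_range, Finset.sum_smul]
  rw [this]

lemma prime_reg {φ : g ≃ₗ[ℂ] g} (hφ : φ ∈ primeGroup (adjointGroup g)) {x : g}
    (hx : IsRegular ℂ x) : IsRegular ℂ (φ x) := by
  rw [isReg_iff] at hx ⊢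
  rwa [hφ (fun y => (ad ℂ g y).charpoly.coeff (LieAlgebra.rank ℂ g)) (isPolyFun_charpoly_coeff _)
    (fun u hu v => by simp only [adj_charpoly hu])]

lemma adj_le_prime {u : g ≃ₗ[ℂ] g} (hu : u ∈ adjointGroup g) :
    u ∈ primeGroup (adjointGroup g) := fun _ _ h v => h u hu v

variable (t) in
theorem main_normed {φ : g ≃ₗ[ℂ] g} (hφ : φ ∈ primeGroup (adjointGroup g)) :
    ∃ u ∈ adjointGroup g, ∀ x ∈ t, (u * φ) x = x := by
  classical
  obtain ⟨r⟩ := exists_RD t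
  obtain ⟨x, hx, hxi⟩ := r.exists_generic
  obtain ⟨u, hu, hut⟩ := conj_exists t (prime_reg hφ ((engel_eq_iff x).1 hx))
  have hψ : u * φ ∈ primeGroup (adjointGroup g) := mul_mem (adj_le_prime hu) hφ
  have hmap : ∀ h ∈ t.toSubmodule, ((u * φ : g ≃ₗ[ℂ] g) : g →ₗ[ℂ] g) h ∈ t.toSubmodule := by
    intro h hh
    obtain ⟨q, hq⟩ := r.exists_IsC x hxi ⟨h, hh⟩
    have h1 := (hq.map hψ).comm
    show (u * φ) h ∈ t
    rw [← hut, LieSubalgebra.mem_engel_iff]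
    exact ⟨1, by simpa using h1⟩
  let ψ : t →ₗ[ℂ] t := ((u * φ : g ≃ₗ[ℂ] g) : g →ₗ[ℂ] g).restrict hmap
  have hψa : ∀ h : t, (ψ h : g) = (u * φ) h := fun h => rfl
  have hid : LinearMap.id ∈ WF t := mem_WF.2 ⟨1, one_mem _, fun h => rfl⟩
  have step1 : ∀ y : t, IsRegular ℂ (y : g) → ∃ w ∈ WF t, w (ψ y) = y := by
    intro y hy
    have hU : ⋃ w : WF t, ((LinearMap.ker (Module.Dual.eval ℂ t (w.1 (ψ y) - y)) :
        Subspace ℂ (Module.Dual ℂ t)) : Set (Module.Dual ℂ t)) = Set.univ := by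
      rw [Set.eq_univ_iff_forall]
      intro l
      obtain ⟨Q, hQ, hQi, hQt⟩ := exists_invariant l (l y)
      have h1 := hψ Q hQ hQi y
      rw [← hψa, hQt y hy, hQt (ψ y) (by rw [hψa]; exact prime_reg hψ hy),
        show ∏ w ∈ WF t, (l (w y) - l y) = 0 from Finset.prod_eq_zero hid (by simp),
        Finset.prod_eq_zero_iff] at h1
      obtain ⟨w, hw, h2⟩ := h1
      rw [Set.mem_iUnion]
      exact ⟨⟨w, hw⟩, by simpa [LinearMap.mem_ker] using h2⟩
    obtain ⟨w, hw⟩ := Subspace.exists_eq_top_of_iUnion_eq_univ hU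
    refine ⟨w.1, w.2, ?_⟩
    rw [LinearMap.ker_eq_top] at hw
    rw [← sub_eq_zero, ← Module.forall_dual_apply_eq_zero_iff ℂ]
    intro l
    exact LinearMap.congr_fun hw l
  let K : WF t ⊕ {i : r.ι // r.α i ≠ 0} → Subspace ℂ t :=
    Sum.elim (fun w => LinearMap.ker (w.1 ∘ₗ ψ - LinearMap.id)) (fun i => LinearMap.ker (r.α i.1))
  have hK : ⋃ i, (K i : Set t) = Set.univ := by
    rw [Set.eq_univ_iff_forall]
    intro y
    rw [Set.mem_iUnion]
    by_cases hy : ∀ i, r.α i ≠ 0 → r.α i y ≠ 0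
    · obtain ⟨w, hw, hwy⟩ := step1 y ((engel_eq_iff y).1 (r.engel_eq y hy))
      exact ⟨Sum.inl ⟨w, hw⟩, by simp [K, LinearMap.mem_ker, hwy]⟩
    · push Not at hy
      obtain ⟨i, hi, hiy⟩ := hy
      exact ⟨Sum.inr ⟨i, hi⟩, by simpa [K, LinearMap.mem_ker] using hiy⟩
  obtain ⟨i, hi⟩ := Subspace.exists_eq_top_of_iUnion_eq_univ hK
  rcases i with w | i
  · have h1 : w.1 ∘ₗ ψ - LinearMap.id = 0 := LinearMap.ker_eq_top.1 hi
    obtain ⟨v, hv, hvw⟩ := mem_WF.1 w.2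
    refine ⟨v * u, mul_mem hv hu, fun y hy => ?_⟩
    have h2 := LinearMap.congr_fun h1 ⟨y, hy⟩
    rw [LinearMap.sub_apply, LinearMap.zero_apply, sub_eq_zero] at h2
    have h3 := congrArg Subtype.val h2
    have h4 := hvw (ψ ⟨y, hy⟩)
    rw [hψa] at h4
    rw [mul_assoc, mul_app]
    exact h4.trans h3
  · exact absurd (LinearMap.ker_eq_top.1 hi) i.2
end nrm

/-- Let `g` be a complex simple Lie algebra, `G = Aut(g)⁰` its adjoint
group acting on `g`, and `t ⊆ g` a fixed Cartan subalgebra.  For every `φ ∈ G'` there is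
an element `u ∈ G` such that `u ∘ φ` restricted to `t` is the identity map on `t`. -/
theorem stmt1 (g : Type) [LieRing g] [LieAlgebra ℂ g] [FiniteDimensional ℂ g]
    [LieAlgebra.IsSimple ℂ g]
    (t : LieSubalgebra ℂ g) [t.IsCartanSubalgebra]
    (φ : g ≃ₗ[ℂ] g) (hφ : φ ∈ primeGroup (adjointGroup g)) :
    ∃ u ∈ adjointGroup g, ∀ x ∈ t, (u * φ) x = x := by
  let e : g ≃ₗ[ℂ] (Fin (Module.finrank ℂ g) → ℂ) := (Module.finBasis ℂ g).equivFun
  let i0 : NormedAddCommGroup g := NormedAddCommGroup.induced g (Fin (Module.finrank ℂ g) → ℂ)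
    e e.injective
  let j0 : NormedSpace ℂ g := NormedSpace.induced ℂ g (Fin (Module.finrank ℂ g) → ℂ) e
  let i1 : NLie g := { __ := i0, __ := ‹LieRing g› }
  let i2 : @NLieAlg g i1 := @NLieAlg.mk g i1 j0 ‹LieAlgebra ℂ g›.lie_smul
  exact @main_normed g i1 i2 ‹FiniteDimensional ℂ g›
    (inferInstance : LieAlgebra.IsKilling ℂ g) t ‹_› φ hφ
end
end
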